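/- arXiv:0711.2223 — 4 statements merged into one kernel-verified Lean document; each statement's English description precedes it below -/
import Mathlib

section
/- An involution w in the symmetric group S_n is Boolean, i.e. the principal order ideal B(w) below w in the Bruhat order on involutions Br(I(S_n)) is isomorphic to a Boolean lattice, if and only if w avoids the patterns 4321, 45312 and 456123. -/
/-!
The Bruhat order is the reflexive-transitive closure `Br` of the steps `u → u * (i j)` with
`i < j` and `u i < u j`. To an adjacent pair `p, q = p + 1` with simple transposition `s` one
attaches the operators `up p q` and `down p q`, which make a permutation as large, respectively as
small, as possible by multiplying with `s` on the right and then on the left. They are monotone for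
the Bruhat order and preserve involutions: where they act nontrivially, they send `u` to `s * u * s`,
or to `u * s` if `u` and `s` commute. A permutation *crosses* the cut between `k` and `k + 1` if it
maps some `i ≤ k` to a value `> k`. The set of crossed cuts, the support, grows along the Bruhat
order, and `s ≤ u` holds exactly when `u` crosses `p` (`Br.crosses`, `swap_le_of_crosses`).

View an involution as a set of arcs `a < w a`. Avoiding the three patterns means being `Sparse`:
no two arcs are nested, and any point lying under two arcs closes an arc (`sparse_iff_avoids`).

*Sparse implies Boolean.* A sparse `w ≠ 1` has a descent `p, q` such that `down p q w` is again
sparse and does not cross `p` (`Sparse.exists_down`). By monotonicity, for every `u ≤ w`,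
`down p q u ≤ down p q w` merely deletes `p` from the support, and `up p q` puts it back. Induction
shows that taking supports is an isomorphism from the ideal below `w` to the subsets of the support
of `w` (`Sparse.ideal_iso`).

*Boolean implies sparse.* Every nontrivial involution lies above a simple transposition, so in a
Boolean ideal an involution is the join of the simple transpositions below it. Hence no involution
strictly below `w` crosses all the cuts that `w` crosses (`IsBooleanInvolution.eq_of_crosses`).
Deleting an arc therefore loses a cut: each arc has a cut crossed by no other arc
(`IsBooleanInvolution.exists_cut_of_arc`), which excludes nested arcs and three openers under a
common cut. A fixed point `c` under two crossing arcs is excluded because the first arc could be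
shortened to end at `c` without losing a cut.
-/

/-- The number of inversions of a permutation of `{0, …, n-1}`:
pairs `(i, j)` with `i < j` and `π i > π j`. -/
def invCount {n : ℕ} (π : Equiv.Perm (Fin n)) : ℕ :=
  (Finset.univ.filter fun p : Fin n × Fin n => p.1 < p.2 ∧ π p.2 < π p.1).card

/-- `w` is an involution: an element of order at most two. -/
def IsInvolution {n : ℕ} (w : Equiv.Perm (Fin n)) : Prop := w * w = 1

/-- A transposition in the symmetric group. -/
def IsTransposition {n : ℕ} (t : Equiv.Perm (Fin n)) : Prop :=
  ∃ i j : Fin n, i ≠ j ∧ t = Equiv.swap i j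

/-- The Bruhat order on the symmetric group: `u ≤ w` iff `w = u * t₁ * ⋯ * tₘ` for
transpositions `t₁, …, tₘ` such that the number of inversions strictly increases
along the products `u * t₁ * ⋯ * tᵢ`. -/
def BruhatLE {n : ℕ} (u w : Equiv.Perm (Fin n)) : Prop :=
  ∃ ts : List (Equiv.Perm (Fin n)),
    (∀ t ∈ ts, IsTransposition t) ∧
    w = ts.foldl (· * ·) u ∧
    ∀ k, k + 1 ≤ ts.length →
      invCount ((ts.take k).foldl (· * ·) u) < invCount ((ts.take (k + 1)).foldl (· * ·) u)

/-- An involution `w` is Boolean if the principal order ideal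
`B(w) = {u ∈ I(Sₙ) : u ≤ w}` of the Bruhat order on involutions is isomorphic,
as a poset, to the Boolean lattice of all subsets of some finite set. -/
def IsBooleanInvolution {n : ℕ} (w : Equiv.Perm (Fin n)) : Prop :=
  ∃ (m : ℕ) (f : {u : Equiv.Perm (Fin n) // IsInvolution u ∧ BruhatLE u w} ≃ Finset (Fin m)),
    ∀ a b, BruhatLE a.1 b.1 ↔ f a ⊆ f b

/-- `π` contains the pattern `p` if there are positions `i₁ < ⋯ < iₘ` such that
`π` restricted to these positions is order-isomorphic to `p`. -/
def ContainsPattern {n m : ℕ} (π : Equiv.Perm (Fin n)) (p : Equiv.Perm (Fin m)) : Prop :=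
  ∃ f : Fin m → Fin n, StrictMono f ∧ ∀ j k : Fin m, π (f j) < π (f k) ↔ p j < p k

/-- The pattern 4321 (in one-line notation, 1-indexed). -/
def p4321 : Equiv.Perm (Fin 4) :=
  ⟨![3, 2, 1, 0], ![3, 2, 1, 0], by decide, by decide⟩

/-- The pattern 45312 (in one-line notation, 1-indexed). -/
def p45312 : Equiv.Perm (Fin 5) :=
  ⟨![3, 4, 2, 0, 1], ![3, 4, 2, 0, 1], by decide, by decide⟩

/-- The pattern 456123 (in one-line notation, 1-indexed). -/
def p456123 : Equiv.Perm (Fin 6) :=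
  ⟨![3, 4, 5, 0, 1, 2], ![3, 4, 5, 0, 1, 2], by decide, by decide⟩

/-! ### The Bruhat order as a closure of single steps -/

open Equiv Relation

/-- A single step up in the Bruhat order: multiplication on the right by `(i j)` where
`i < j` is not an inversion of `u`. -/
def BStep {n : ℕ} (u v : Perm (Fin n)) : Prop :=
  ∃ i j : Fin n, i < j ∧ u i < u j ∧ v = u * swap i j

/-- The Bruhat order, as the reflexive-transitive closure of single steps. -/
abbrev Br {n : ℕ} (u v : Perm (Fin n)) : Prop := ReflTransGen BStep u v

/-- Exchanging the values at a non-inversion `i < j` creates inversions: applying `(i j)` to both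
positions of an inversion, when that keeps them in order, and doing nothing otherwise, injects the
inversions of `u` into those of `u * (i j)`, and misses `(i, j)`. -/
theorem invCount_lt_mul_swap {n : ℕ} (u : Perm (Fin n)) {i j : Fin n} (hij : i < j)
    (h : u i < u j) : invCount u < invCount (u * swap i j) := by
  classical
  let g : Fin n × Fin n → Fin n × Fin n := fun p =>
    if swap i j p.1 < swap i j p.2 then (swap i j p.1, swap i j p.2) else p
  have hss : ∀ x, swap i j (swap i j x) = x := swap_apply_self i j
  have hinj : Set.InjOn g
      (Finset.univ.filter fun p : Fin n × Fin n => p.1 < p.2 ∧ u p.2 < u p.1) := by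
    rintro ⟨a, b⟩ hab ⟨c, d⟩ hcd heq
    simp only [Finset.coe_filter, Finset.mem_univ, true_and, Set.mem_ofPred_eq] at hab hcd
    simp only [g] at heq
    split_ifs at heq with h1 h2 h2
    all_goals simp only [Prod.mk.injEq] at heq ⊢
    · exact ⟨(swap i j).injective heq.1, (swap i j).injective heq.2⟩
    · rw [← heq.1, ← heq.2, hss, hss] at h2
      exact absurd hab.1 h2
    · rw [heq.1, heq.2, hss, hss] at h1
      exact absurd hcd.1 h1
    · exact heq
  unfold invCount
  rw [← Finset.card_image_of_injOn hinj]
  apply Finset.card_lt_card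
  rw [Finset.ssubset_iff_of_subset]
  · refine ⟨(i, j), ?_, ?_⟩
    · exact Finset.mem_filter.2 ⟨Finset.mem_univ _, hij, by simpa using h⟩
    · simp only [Finset.mem_image, Finset.mem_filter, Finset.mem_univ, true_and, not_exists,
        not_and, Prod.forall, g]
      intro a b hab heq
      split_ifs at heq with h1
      · simp only [Prod.mk.injEq] at heq
        have ha : a = j := by rw [← hss a, heq.1, swap_apply_left]
        have hb : b = i := by rw [← hss b, heq.2, swap_apply_right]
        subst ha hb
        exact absurd hab.1 (not_lt.2 hij.le)
      · simp only [Prod.mk.injEq] at heq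
        rw [heq.1, heq.2] at hab
        exact absurd hab.2 (not_lt.2 h.le)
  · intro p hp
    simp only [Finset.mem_image, Finset.mem_filter, Finset.mem_univ, true_and, g] at hp ⊢
    obtain ⟨⟨a, b⟩, ⟨hab, hu⟩, rfl⟩ := hp
    split_ifs with h1
    · simp [h1, hss, hu]
    · refine ⟨hab, ?_⟩
      simp only [Perm.coe_mul, Function.comp_apply]
      simp only [swap_apply_def] at h1 ⊢
      grind

theorem bstep_iff {n : ℕ} (u v : Perm (Fin n)) :
    BStep u v ↔ ∃ t, IsTransposition t ∧ v = u * t ∧ invCount u < invCount v := by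
  constructor
  · rintro ⟨i, j, hij, h, rfl⟩
    exact ⟨_, ⟨i, j, hij.ne, rfl⟩, rfl, invCount_lt_mul_swap u hij h⟩
  · have key : ∀ i j : Fin n, i < j → invCount u < invCount (u * swap i j) →
        BStep u (u * swap i j) := by
      intro i j hij hlt
      refine ⟨i, j, hij, ?_, rfl⟩
      by_contra hcon
      have hne : u i ≠ u j := fun e => hij.ne (u.injective e)
      have h2 := invCount_lt_mul_swap (u * swap i j) hij (by
        simpa using lt_of_le_of_ne (not_lt.1 hcon) hne.symm)
      rw [mul_assoc, swap_mul_self, mul_one] at h2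
      omega
    rintro ⟨t, ⟨i, j, hij, rfl⟩, rfl, hlt⟩
    rcases lt_or_gt_of_ne hij with h | h
    · exact key i j h hlt
    · rw [swap_comm] at hlt ⊢
      exact key j i h hlt

theorem bruhatLE_iff_br {n : ℕ} (u w : Perm (Fin n)) : BruhatLE u w ↔ Br u w := by
  constructor
  · rintro ⟨ts, ht, rfl, hk⟩
    induction ts generalizing u with
    | nil => exact ReflTransGen.refl
    | cons t ts ih =>
      refine ReflTransGen.head ((bstep_iff u (u * t)).2 ⟨t, ht t (by simp), rfl, ?_⟩)
        (ih (u * t) (fun t' h' => ht t' (by simp [h'])) ?_)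
      · simpa using hk 0 (by simp)
      · intro k hk'
        simpa using hk (k + 1) (by simpa using hk')
  · intro h
    induction h using ReflTransGen.head_induction_on with
    | refl => exact ⟨[], by simp, rfl, by simp⟩
    | head hs _ ih =>
      obtain ⟨t, ht, rfl, hlt⟩ := (bstep_iff _ _).1 hs
      obtain ⟨ts, h1, h2, h3⟩ := ih
      refine ⟨t :: ts, ?_, by simpa using h2, ?_⟩
      · intro t' h'
        rcases List.mem_cons.1 h' with rfl | h'
        · exact ht
        · exact h1 _ h'
      · intro k hk
        cases k with
        | zero => simpa using hlt
        | succ k => simpa using h3 k (by simpa using hk)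

theorem Br.invCount_lt_or_eq {n : ℕ} {u w : Perm (Fin n)} (h : Br u w) :
    invCount u < invCount w ∨ u = w := by
  induction h with
  | refl => exact Or.inr rfl
  | tail _ hs ih =>
    obtain ⟨_, _, _, hlt⟩ := (bstep_iff _ _).1 hs
    rcases ih with ih | rfl
    · exact Or.inl (ih.trans hlt)
    · exact Or.inl hlt

theorem Br.antisymm {n : ℕ} {u w : Perm (Fin n)} (h : Br u w) (h' : Br w u) : u = w := by
  rcases h.invCount_lt_or_eq with h1 | h1
  · rcases h'.invCount_lt_or_eq with h2 | h2
    · omega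
    · exact h2.symm
  · exact h1

theorem Br.inv {n : ℕ} {u w : Perm (Fin n)} (h : Br u w) : Br u⁻¹ w⁻¹ := by
  induction h with
  | refl => exact ReflTransGen.refl
  | @tail x y _ hs ih =>
    obtain ⟨i, j, hij, hx, rfl⟩ := hs
    refine ih.tail ⟨x i, x j, hx, by simpa using hij, ?_⟩
    rw [mul_inv_rev, swap_inv, swap_apply_apply, mul_assoc]
    group

/-! ### Monotone operators attached to a simple transposition -/

/-- The larger of `u` and `u * (p q)`, for `p < q`. -/
def upR {n : ℕ} (p q : Fin n) (u : Perm (Fin n)) : Perm (Fin n) :=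
  if u p < u q then u * swap p q else u

/-- The smaller of `u` and `u * (p q)`, for `p < q`. -/
def downR {n : ℕ} (p q : Fin n) (u : Perm (Fin n)) : Perm (Fin n) :=
  if u q < u p then u * swap p q else u

/-- `upR` applied on the right and then, through inversion, on the left. -/
def up {n : ℕ} (p q : Fin n) (u : Perm (Fin n)) : Perm (Fin n) :=
  (upR p q (upR p q u)⁻¹)⁻¹

/-- `downR` applied on the right and then, through inversion, on the left. -/
def down {n : ℕ} (p q : Fin n) (u : Perm (Fin n)) : Perm (Fin n) :=
  (downR p q (downR p q u)⁻¹)⁻¹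

section Simple

variable {n : ℕ} {p q : Fin n}

theorem le_upR (hpq : p < q) (u : Perm (Fin n)) : Br u (upR p q u) := by
  unfold upR
  split_ifs with h
  · exact ReflTransGen.single ⟨p, q, hpq, h, rfl⟩
  · exact ReflTransGen.refl

theorem downR_le (hpq : p < q) (u : Perm (Fin n)) : Br (downR p q u) u := by
  unfold downR
  split_ifs with h
  · exact ReflTransGen.single ⟨p, q, hpq, by simpa using h, by simp [mul_assoc]⟩
  · exact ReflTransGen.refl

/-- A simple transposition keeps every pair of positions in order except `(p, q)` itself, so right
multiplication by it preserves every step but the one it performs. -/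
theorem BStep.mul_simple (hpq : (q : ℕ) = p + 1) {u v : Perm (Fin n)} (h : BStep u v) :
    v = u * swap p q ∨ BStep (u * swap p q) (v * swap p q) := by
  obtain ⟨i, j, hij, hu, rfl⟩ := h
  by_cases h1 : i = p ∧ j = q
  · left; rw [h1.1, h1.2]
  · right
    refine ⟨swap p q i, swap p q j, ?_, by simpa using hu, ?_⟩
    · simp only [swap_apply_def]
      grind
    · rw [swap_apply_apply]
      simp [mul_assoc]

theorem upR_of_lt {u : Perm (Fin n)} (h : u p < u q) : upR p q u = u * swap p q := if_pos h
theorem upR_of_gt {u : Perm (Fin n)} (h : u q < u p) : upR p q u = u := if_neg h.not_gt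
theorem downR_of_gt {u : Perm (Fin n)} (h : u q < u p) : downR p q u = u * swap p q := if_pos h
theorem downR_of_lt {u : Perm (Fin n)} (h : u p < u q) : downR p q u = u := if_neg h.not_gt

theorem mul_swap_cases (hpq : p < q) (u : Perm (Fin n)) : u p < u q ∨ u q < u p :=
  lt_or_gt_of_ne fun e => hpq.ne (u.injective e)

theorem mul_swap_le_upR (hpq : p < q) (u : Perm (Fin n)) : Br (u * swap p q) (upR p q u) := by
  rcases mul_swap_cases hpq u with h | h
  · rw [upR_of_lt h]
  · rw [upR_of_gt h]
    simpa [downR_of_gt h] using downR_le hpq u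

theorem downR_le_mul_swap (hpq : p < q) (u : Perm (Fin n)) :
    Br (downR p q u) (u * swap p q) := by
  rcases mul_swap_cases hpq u with h | h
  · rw [downR_of_lt h]
    simpa [upR_of_lt h] using le_upR hpq u
  · rw [downR_of_gt h]

/-- Monotonicity of `upR`, a form of the lifting property of the Bruhat order. -/
theorem Br.upR (hpq : (q : ℕ) = p + 1) {u w : Perm (Fin n)} (h : Br u w) :
    Br (upR p q u) (upR p q w) := by
  have hlt : p < q := by omega
  induction h with
  | refl => exact ReflTransGen.refl
  | @tail x y _ hs ih =>
    refine ih.trans ?_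
    rcases mul_swap_cases hlt x with hx | hx
    · rw [upR_of_lt hx]
      rcases hs.mul_simple hpq with rfl | h1
      · exact le_upR hlt _
      · exact (ReflTransGen.single h1).trans (mul_swap_le_upR hlt y)
    · rw [upR_of_gt hx]
      exact (ReflTransGen.single hs).trans (le_upR hlt y)

/-- Monotonicity of `downR`, a form of the lifting property of the Bruhat order. -/
theorem Br.downR (hpq : (q : ℕ) = p + 1) {u w : Perm (Fin n)} (h : Br u w) :
    Br (downR p q u) (downR p q w) := by
  have hlt : p < q := by omega
  induction h with
  | refl => exact ReflTransGen.refl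
  | @tail x y _ hs ih =>
    refine ih.trans ?_
    rcases mul_swap_cases hlt y with hy | hy
    · rw [downR_of_lt hy]
      exact (downR_le hlt x).trans (ReflTransGen.single hs)
    · rw [downR_of_gt hy]
      rcases hs.mul_simple hpq with rfl | h1
      · simpa [mul_assoc] using downR_le hlt x
      · exact (downR_le_mul_swap hlt x).trans (ReflTransGen.single h1)

theorem Br.up (hpq : (q : ℕ) = p + 1) {u w : Perm (Fin n)} (h : Br u w) :
    Br (up p q u) (up p q w) := ((h.upR hpq).inv.upR hpq).inv

theorem Br.down (hpq : (q : ℕ) = p + 1) {u w : Perm (Fin n)} (h : Br u w) :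
    Br (down p q u) (down p q w) := ((h.downR hpq).inv.downR hpq).inv

theorem le_up (hpq : p < q) (u : Perm (Fin n)) : Br u (up p q u) := by
  have := (le_upR hpq (upR p q u)⁻¹).inv
  rw [inv_inv] at this
  exact (le_upR hpq u).trans this

theorem down_le (hpq : p < q) (u : Perm (Fin n)) : Br (down p q u) u := by
  have := (downR_le hpq (downR p q u)⁻¹).inv
  rw [inv_inv] at this
  exact this.trans (downR_le hpq u)

end Simple

/-! ### Involutions -/

section Involution

variable {n : ℕ} {p q : Fin n}

theorem IsInvolution.apply_apply {u : Perm (Fin n)} (hu : IsInvolution u) (x : Fin n) :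
    u (u x) = x := by
  rw [← Perm.mul_apply, hu, Perm.one_apply]

theorem IsInvolution.inv_eq {u : Perm (Fin n)} (hu : IsInvolution u) : u⁻¹ = u :=
  inv_eq_of_mul_eq_one_left hu

theorem isInvolution_of_apply {u : Perm (Fin n)} (h : ∀ x, u (u x) = x) : IsInvolution u :=
  Perm.ext h

theorem IsInvolution.conj {u : Perm (Fin n)} (hu : IsInvolution u) (a b : Fin n) :
    IsInvolution (swap a b * u * swap a b) := by
  apply isInvolution_of_apply
  intro x
  simp [hu.apply_apply]

theorem down_of_lt {u : Perm (Fin n)} (hu : IsInvolution u) (h : u p < u q) :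
    down p q u = u := by
  unfold down
  rw [downR_of_lt h, hu.inv_eq, downR_of_lt h, hu.inv_eq]

theorem up_of_gt {u : Perm (Fin n)} (hu : IsInvolution u) (h : u q < u p) :
    up p q u = u := by
  unfold up
  rw [upR_of_gt h, hu.inv_eq, upR_of_gt h, hu.inv_eq]

theorem down_of_gt_of_ne (hpq : (q : ℕ) = p + 1) {u : Perm (Fin n)} (hu : IsInvolution u)
    (h : u q < u p) (h' : u p ≠ q) : down p q u = swap p q * u * swap p q := by
  unfold down
  rw [downR_of_gt h, mul_inv_rev, swap_inv, hu.inv_eq, downR_of_gt]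
  · simp [hu.inv_eq, mul_assoc]
  · simp only [Perm.coe_mul, Function.comp_apply, swap_apply_def]
    have := hu.apply_apply p
    have := hu.apply_apply q
    grind

theorem down_of_eq (hpq : (q : ℕ) = p + 1) {u : Perm (Fin n)} (hu : IsInvolution u)
    (h : u p = q) : down p q u = u * swap p q := by
  have h2 : u q = p := by rw [← h, hu.apply_apply]
  have hlt : p < q := by omega
  unfold down
  rw [downR_of_gt (u := u) (by rwa [h, h2]), mul_inv_rev, swap_inv, hu.inv_eq, downR_of_lt]
  · simp [hu.inv_eq]
  · simpa [h, h2] using hlt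

theorem up_of_lt_of_ne (hpq : (q : ℕ) = p + 1) {u : Perm (Fin n)} (hu : IsInvolution u)
    (h : u p < u q) (h' : ¬ (u p = p ∧ u q = q)) : up p q u = swap p q * u * swap p q := by
  unfold up
  rw [upR_of_lt h, mul_inv_rev, swap_inv, hu.inv_eq, upR_of_lt]
  · simp [hu.inv_eq, mul_assoc]
  · simp only [Perm.coe_mul, Function.comp_apply, swap_apply_def]
    have := hu.apply_apply p
    have := hu.apply_apply q
    grind

theorem up_of_eq (hpq : p < q) {u : Perm (Fin n)} (hu : IsInvolution u)
    (hp : u p = p) (hq : u q = q) : up p q u = u * swap p q := by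
  unfold up
  rw [upR_of_lt (u := u) (by rwa [hp, hq]), mul_inv_rev, swap_inv, hu.inv_eq, upR_of_gt]
  · simp [hu.inv_eq]
  · simpa [hp, hq] using hpq

theorem mul_swap_eq_of_apply_eq {u : Perm (Fin n)} (hu : IsInvolution u) (h : u p = q) :
    u * swap p q = swap p q * u := by
  have h2 : u q = p := by rw [← h, hu.apply_apply]
  have := swap_apply_apply u p q
  rw [h, h2, swap_comm] at this
  conv_rhs => rw [this]
  simp

theorem mul_swap_eq_of_fixed {u : Perm (Fin n)} (hp : u p = p) (hq : u q = q) :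
    u * swap p q = swap p q * u := by
  have := swap_apply_apply u p q
  rw [hp, hq] at this
  conv_rhs => rw [this]
  simp

theorem IsInvolution.mul_swap {u : Perm (Fin n)} (hu : IsInvolution u)
    (h : u * swap p q = swap p q * u) : IsInvolution (u * swap p q) := by
  unfold IsInvolution
  conv_lhs => enter [1]; rw [h]
  rw [mul_assoc, ← mul_assoc u u, hu, one_mul, swap_mul_self]

theorem IsInvolution.down (hpq : (q : ℕ) = p + 1) {u : Perm (Fin n)} (hu : IsInvolution u) :
    IsInvolution (down p q u) := by
  rcases mul_swap_cases (show p < q by omega) u with h | h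
  · rwa [down_of_lt hu h]
  · by_cases h' : u p = q
    · rw [down_of_eq hpq hu h']
      exact hu.mul_swap (mul_swap_eq_of_apply_eq hu h')
    · rw [down_of_gt_of_ne hpq hu h h']
      exact hu.conj p q

theorem IsInvolution.up (hpq : (q : ℕ) = p + 1) {u : Perm (Fin n)} (hu : IsInvolution u) :
    IsInvolution (up p q u) := by
  rcases mul_swap_cases (show p < q by omega) u with h | h
  · by_cases h' : u p = p ∧ u q = q
    · rw [up_of_eq (by omega) hu h'.1 h'.2]
      exact hu.mul_swap (mul_swap_eq_of_fixed h'.1 h'.2)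
    · rw [up_of_lt_of_ne hpq hu h h']
      exact hu.conj p q
  · rwa [up_of_gt hu h]

/-- At a descent, `down` and `up` undo each other. -/
theorem up_down (hpq : (q : ℕ) = p + 1) {u : Perm (Fin n)} (hu : IsInvolution u)
    (h : u q < u p) : up p q (down p q u) = u := by
  have hlt : p < q := by omega
  by_cases h' : u p = q
  · have h2 : u q = p := by rw [← h', hu.apply_apply]
    have hd := down_of_eq hpq hu h'
    rw [up_of_eq hlt (hu.down hpq) (by simp [hd, h2]) (by simp [hd, h']), hd]
    simp [mul_assoc]
  · have hd := down_of_gt_of_ne hpq hu h h'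
    have hq := hu.apply_apply q
    have hp := hu.apply_apply p
    rw [up_of_lt_of_ne hpq (hu.down hpq), hd]
    · simp [mul_assoc]
    · rw [hd]
      simp only [Perm.coe_mul, Function.comp_apply, swap_apply_left, swap_apply_right]
      simp only [swap_apply_def]
      grind
    · rw [hd]
      simp only [Perm.coe_mul, Function.comp_apply, swap_apply_left, swap_apply_right]
      simp only [swap_apply_def]
      grind

/-! ### Crossed cuts -/

/-- `u` crosses the cut between `k` and `k + 1`: it maps some point weakly left of `k` to a
point strictly right of `k`. -/
def Crosses {n : ℕ} (u : Perm (Fin n)) (k : Fin n) : Prop := ∃ i ≤ k, k < u i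

/-- Crossing a cut is preserved upwards in the Bruhat order. -/
theorem Br.crosses {u w : Perm (Fin n)} (h : Br u w) {k : Fin n} (hk : Crosses u k) :
    Crosses w k := by
  induction h with
  | refl => exact hk
  | tail _ hs ih =>
    obtain ⟨a, b, hab, hx, rfl⟩ := hs
    obtain ⟨i, hik, hki⟩ := ih
    by_cases ha : i = a ∨ i = b
    · refine ⟨a, ?_, ?_⟩
      · grind
      · simp only [Perm.coe_mul, Function.comp_apply, swap_apply_left]
        grind
    · push Not at ha
      refine ⟨i, hik, ?_⟩
      simpa [swap_apply_of_ne_of_ne ha.1 ha.2] using hki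

theorem not_crosses_one (k : Fin n) : ¬ Crosses (1 : Perm (Fin n)) k := by
  rintro ⟨i, h1, h2⟩
  exact absurd h2 (not_lt.2 h1)

theorem crosses_swap (hpq : p < q) : Crosses (swap p q) p := ⟨p, le_rfl, by simpa using hpq⟩

theorem crosses_mul_swap (hpq : (q : ℕ) = p + 1) {u : Perm (Fin n)} {k : Fin n} (hk : k ≠ p) :
    Crosses (u * swap p q) k ↔ Crosses u k := by
  have key : ∀ v : Perm (Fin n), Crosses v k → Crosses (v * swap p q) k := by
    rintro v ⟨i, hik, hki⟩
    refine ⟨swap p q i, ?_, by simpa using hki⟩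
    simp only [swap_apply_def]
    grind
  exact ⟨fun h => by simpa [mul_assoc] using key _ h, key u⟩

theorem crosses_swap_mul (hpq : (q : ℕ) = p + 1) {u : Perm (Fin n)} {k : Fin n} (hk : k ≠ p) :
    Crosses (swap p q * u) k ↔ Crosses u k := by
  have key : ∀ v : Perm (Fin n), Crosses v k → Crosses (swap p q * v) k := by
    rintro v ⟨i, hik, hki⟩
    refine ⟨i, hik, ?_⟩
    simp only [Perm.coe_mul, Function.comp_apply, swap_apply_def]
    grind
  exact ⟨fun h => by simpa [← mul_assoc] using key _ h, key u⟩

theorem crosses_down (hpq : (q : ℕ) = p + 1) {u : Perm (Fin n)} (hu : IsInvolution u)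
    {k : Fin n} (hk : k ≠ p) : Crosses (down p q u) k ↔ Crosses u k := by
  rcases mul_swap_cases (show p < q by omega) u with h | h
  · rw [down_of_lt hu h]
  · by_cases h' : u p = q
    · rw [down_of_eq hpq hu h', crosses_mul_swap hpq hk]
    · rw [down_of_gt_of_ne hpq hu h h', crosses_mul_swap hpq hk, crosses_swap_mul hpq hk]

theorem crosses_up (hpq : (q : ℕ) = p + 1) {u : Perm (Fin n)} (hu : IsInvolution u)
    {k : Fin n} (hk : k ≠ p) : Crosses (up p q u) k ↔ Crosses u k := by
  rcases mul_swap_cases (show p < q by omega) u with h | h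
  · by_cases h' : u p = p ∧ u q = q
    · rw [up_of_eq (by omega) hu h'.1 h'.2, crosses_mul_swap hpq hk]
    · rw [up_of_lt_of_ne hpq hu h h', crosses_mul_swap hpq hk, crosses_swap_mul hpq hk]
  · rw [up_of_gt hu h]

/-- A permutation without descents is an increasing bijection, hence the identity. -/
theorem exists_descent {u : Perm (Fin n)} (hu : u ≠ 1) :
    ∃ p q : Fin n, (q : ℕ) = p + 1 ∧ u q < u p := by
  by_contra! hcon
  apply hu
  cases n with
  | zero => exact Subsingleton.elim _ _
  | succ n =>
    have hm : StrictMono u := by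
      rw [Fin.strictMono_iff_lt_succ]
      intro i
      refine lt_of_le_of_ne (hcon _ _ (by simp)) fun e => ?_
      exact absurd (u.injective e) (by simp [Fin.ext_iff])
    let e : Fin (n + 1) ≃o Fin (n + 1) := StrictMono.orderIsoOfSurjective u hm u.surjective
    have he : e = OrderIso.refl _ := Subsingleton.elim _ _
    ext x
    have := congrArg (fun g : Fin (n + 1) ≃o Fin (n + 1) => g x) he
    exact congrArg Fin.val (by simpa [e] using this)

theorem downR_lt (hpq : p < q) {u : Perm (Fin n)} (h : u q < u p) :
    invCount (downR p q u) < invCount u := by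
  have h2 := invCount_lt_mul_swap (downR p q u) hpq (by simpa [downR_of_gt h] using h)
  simpa [downR_of_gt h, mul_assoc] using h2

theorem one_br (u : Perm (Fin n)) : Br 1 u := by
  induction hN : invCount u using Nat.strong_induction_on generalizing u with
  | _ N ih =>
    by_cases hu : u = 1
    · rw [hu]
    · obtain ⟨p, q, hpq, h⟩ := exists_descent hu
      have hlt : p < q := by omega
      exact (ih _ (hN ▸ downR_lt hlt h) _ rfl).trans (downR_le hlt u)

theorem swap_le_upR (hpq : (q : ℕ) = p + 1) (u : Perm (Fin n)) :
    Br (swap p q) (upR p q u) := by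
  have := (one_br u).upR hpq
  rwa [upR_of_lt (show (1 : Perm (Fin n)) p < (1 : Perm (Fin n)) q by simp; omega),
    one_mul] at this

theorem swap_le_of_descent (hpq : (q : ℕ) = p + 1) {u : Perm (Fin n)} (h : u q < u p) :
    Br (swap p q) u := by
  have := swap_le_upR hpq u
  rwa [upR_of_gt h] at this

theorem crosses_up_self (hpq : (q : ℕ) = p + 1) (u : Perm (Fin n)) : Crosses (up p q u) p := by
  have hlt : p < q := by omega
  have h1 : Br (upR p q u) (up p q u) := by
    simpa [up] using (le_upR hlt (upR p q u)⁻¹).inv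
  exact Br.crosses ((swap_le_upR hpq u).trans h1) (crosses_swap hlt)

/-- Converse of `Br.crosses` for a simple transposition: peeling off descents other than `p`
keeps the cut `p` crossed, so a descent at `p` is eventually met. -/
theorem swap_le_of_crosses (hpq : (q : ℕ) = p + 1) {u : Perm (Fin n)} (h : Crosses u p) :
    Br (swap p q) u := by
  induction hN : invCount u using Nat.strong_induction_on generalizing u with
  | _ N ih =>
    have hu : u ≠ 1 := by
      rintro rfl
      exact not_crosses_one p h
    obtain ⟨p', q', hpq', hd⟩ := exists_descent hu
    by_cases hp : p = p'
    · subst hp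
      obtain rfl : q = q' := by omega
      exact swap_le_of_descent hpq hd
    · have hlt : p' < q' := by omega
      refine (ih _ (hN ▸ downR_lt hlt hd) ?_ rfl).trans (downR_le hlt u)
      rw [downR_of_gt hd]
      exact (crosses_mul_swap hpq' hp).2 h

end Involution

/-! ### Arcs and patterns -/

/-- The description, by arcs `a < w a`, of the involutions avoiding the three patterns. -/
structure Sparse {n : ℕ} (w : Perm (Fin n)) : Prop where
  /-- No arc lies under another one: later openers have later closers. -/
  not_nested : ∀ a b, a < b → b < w b → w a < w b
  /-- A point lying under two arcs is the right end of an arc. -/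
  closes : ∀ a b c, a < b → b < c → c < w a → c < w b → w c < c

section Patterns

variable {n : ℕ}

theorem sparse_of_avoids {w : Perm (Fin n)} (hw : IsInvolution w)
    (h1 : ¬ ContainsPattern w p4321) (h2 : ¬ ContainsPattern w p45312)
    (h3 : ¬ ContainsPattern w p456123) : Sparse w := by
  have hA : ∀ a b, a < b → b < w b → w a < w b := by
    intro a b hab hb
    by_contra hcon
    have hne : w b < w a := lt_of_le_of_ne (not_lt.1 hcon) fun e => hab.ne (w.injective e.symm)
    apply h1
    refine ⟨![a, b, w b, w a], ?_, ?_⟩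
    · rw [Fin.strictMono_iff_lt_succ]
      intro i
      fin_cases i <;> simp [*]
    · intro j k
      fin_cases j <;> fin_cases k <;> simp [p4321, hw.apply_apply] <;> grind
  refine ⟨hA, ?_⟩
  intro a b c hab hbc hca hcb
  by_contra hcon
  have hab' := hA a b hab (hbc.trans hcb)
  rcases (not_lt.1 hcon).eq_or_lt with hc | hc
  · have hc' : w c = c := hc.symm
    clear hc hcon
    apply h2
    refine ⟨![a, b, c, w a, w b], ?_, ?_⟩
    · rw [Fin.strictMono_iff_lt_succ]
      intro i
      fin_cases i <;> simp [*]
    · intro j k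
      fin_cases j <;> fin_cases k <;> simp [p45312, hw.apply_apply, hc'] <;> grind
  · have hbc' := hA b c hbc hc
    apply h3
    refine ⟨![a, b, c, w a, w b, w c], ?_, ?_⟩
    · rw [Fin.strictMono_iff_lt_succ]
      intro i
      fin_cases i <;> simp [*]
    · intro j k
      fin_cases j <;> fin_cases k <;> simp [p456123, hw.apply_apply] <;> grind

theorem Sparse.avoids_4321 {w : Perm (Fin n)} (hw : IsInvolution w) (h : Sparse w) :
    ¬ ContainsPattern w p4321 := by
  rintro ⟨f, hf, hp⟩
  have f01 : f 0 < f 1 := hf (by decide)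
  have f12 : f 1 < f 2 := hf (by decide)
  have f23 : f 2 < f 3 := hf (by decide)
  have v10 : w (f 1) < w (f 0) := (hp 1 0).2 (by decide)
  have v21 : w (f 2) < w (f 1) := (hp 2 1).2 (by decide)
  have v32 : w (f 3) < w (f 2) := (hp 3 2).2 (by decide)
  have e := hw.apply_apply
  by_cases hb : f 1 < w (f 1)
  · exact absurd (h.not_nested _ _ f01 hb) v10.not_gt
  · have := h.not_nested _ _ v32 (by rw [e]; grind)
    rw [e, e] at this
    exact absurd this f23.not_gt

theorem Sparse.avoids_45312 {w : Perm (Fin n)} (hw : IsInvolution w) (h : Sparse w) :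
    ¬ ContainsPattern w p45312 := by
  rintro ⟨f, hf, hp⟩
  have f01 : f 0 < f 1 := hf (by decide)
  have f12 : f 1 < f 2 := hf (by decide)
  have f23 : f 2 < f 3 := hf (by decide)
  have v01 : w (f 0) < w (f 1) := (hp 0 1).2 (by decide)
  have v20 : w (f 2) < w (f 0) := (hp 2 0).2 (by decide)
  have v32 : w (f 3) < w (f 2) := (hp 3 2).2 (by decide)
  have e := hw.apply_apply
  rcases lt_trichotomy (w (f 2)) (f 2) with hc | hc | hc
  · have := h.not_nested _ _ v32 (by rw [e]; exact hc)
    rw [e, e] at this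
    exact absurd this f23.not_gt
  · have := h.closes _ _ _ f01 f12 (by grind) (by grind)
    grind
  · have := h.not_nested _ _ (f01.trans f12) hc
    grind

theorem Sparse.avoids_456123 {w : Perm (Fin n)} (hw : IsInvolution w) (h : Sparse w) :
    ¬ ContainsPattern w p456123 := by
  rintro ⟨f, hf, hp⟩
  have f01 : f 0 < f 1 := hf (by decide)
  have f12 : f 1 < f 2 := hf (by decide)
  have f23 : f 2 < f 3 := hf (by decide)
  have f34 : f 3 < f 4 := hf (by decide)
  have f45 : f 4 < f 5 := hf (by decide)
  have v34 : w (f 3) < w (f 4) := (hp 3 4).2 (by decide)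
  have v45 : w (f 4) < w (f 5) := (hp 4 5).2 (by decide)
  have v50 : w (f 5) < w (f 0) := (hp 5 0).2 (by decide)
  have v01 : w (f 0) < w (f 1) := (hp 0 1).2 (by decide)
  have v12 : w (f 1) < w (f 2) := (hp 1 2).2 (by decide)
  have e := hw.apply_apply
  by_cases hc : f 2 < w (f 0)
  · have := h.closes _ _ _ f01 f12 hc (hc.trans v01)
    grind
  · have := h.closes _ _ _ v34 v45 (by rw [e]; grind) (by rw [e]; grind)
    rw [e] at this
    grind

theorem sparse_iff_avoids {w : Perm (Fin n)} (hw : IsInvolution w) : Sparse w ↔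
    ¬ ContainsPattern w p4321 ∧ ¬ ContainsPattern w p45312 ∧ ¬ ContainsPattern w p456123 :=
  ⟨fun h => ⟨h.avoids_4321 hw, h.avoids_45312 hw, h.avoids_456123 hw⟩,
    fun h => sparse_of_avoids hw h.1 h.2.1 h.2.2⟩

/-! ### Removing a simple transposition -/

/-- A criterion to transfer sparsity from `w` to `v`. Each arc `(x, v x)` of `v` is either an arc
`(φ x, v x)` of `w` whose opener has moved to the right, or an arc joining neighbours with no
arc of `v` going over its opener (`hφ`). The map `φ` keeps the order of the openers (`hm`), where the
first one may be ignored if it belongs to an arc between neighbours. A closer of `w`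
remains one in `v` unless no arc of `v` goes over it any more (`hc`). -/
theorem Sparse.of_arcs {w v : Perm (Fin n)} (h : Sparse w) (φ : Fin n → Fin n)
    (hφ : ∀ x, x < v x → (φ x ≤ x ∧ w (φ x) = v x) ∨
      ((v x : ℕ) = x + 1 ∧ ∀ y < x, v y ≤ y))
    (hm : ∀ x y : Fin n, x < y → (x : ℕ) + 1 < v x → y < v y → φ x < φ y)
    (hc : ∀ x, w x < x → v x < x ∨ ∀ y < x, v y ≤ x) : Sparse v := by
  constructor
  · intro a b hab hb
    by_cases ha : (a : ℕ) + 1 < v a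
    · rcases hφ b hb with ⟨h1, h2⟩ | ⟨h1, h2⟩
      · rcases hφ a (by omega) with ⟨h3, h4⟩ | ⟨h3, h4⟩
        · rw [← h2, ← h4]
          exact h.not_nested _ _ (hm a b hab ha hb) (by rw [h2]; omega)
        · omega
      · have := h2 a hab
        omega
    · omega
  · intro a b c hab hbc hca hcb
    suffices hwc : w c < c by
      refine (hc c hwc).resolve_right fun h1 => ?_
      have := h1 b hbc
      omega
    rcases hφ a (by omega) with ⟨h1, h2⟩ | ⟨h1, h2⟩
    · rcases hφ b (by omega) with ⟨h3, h4⟩ | ⟨h3, h4⟩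
      · exact h.closes (φ a) (φ b) c (hm a b hab (by omega) (by omega)) (by omega)
          (by rwa [h2]) (by rwa [h4])
      · have := h4 a hab
        omega
    · omega

/-- A nontrivial sparse involution can be lowered to a sparse one that misses a cut. With `a` the
first point that is not fixed, the descent is at `a` if `a + 1` is the closer of `a` or a fixed
point. Otherwise `a + 1` is an opener, sparsity forces `w a = a + 2`, and the descent is at
`a + 1`. -/
theorem Sparse.exists_down {w : Perm (Fin n)} (hw : IsInvolution w) (h : Sparse w)
    (h1 : w ≠ 1) : ∃ p q : Fin n, (q : ℕ) = p + 1 ∧ w q < w p ∧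
      ¬ Crosses (down p q w) p ∧ Sparse (down p q w) := by
  have e := hw.apply_apply
  obtain ⟨a, ha, hmin⟩ : ∃ a, w a ≠ a ∧ ∀ i < a, w i = i := by
    have : ∃ a, w a ≠ a := by
      by_contra! hcon
      exact h1 (Perm.ext hcon)
    obtain ⟨a, ha, hmin⟩ := WellFounded.has_min (wellFounded_lt (α := Fin n)) {a | w a ≠ a} this
    exact ⟨a, ha, fun i hi => by_contra fun hne => hmin i hne hi⟩
  have hlt : a < w a := by
    by_contra hcon
    have := hmin (w a) (lt_of_le_of_ne (not_lt.1 hcon) ha)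
    rw [e] at this
    exact ha this.symm
  obtain ⟨q, hq⟩ : ∃ q : Fin n, (q : ℕ) = a + 1 := ⟨⟨a + 1, by omega⟩, rfl⟩
  have hge : ∀ i, a ≤ i → a ≤ w i := by
    intro i hi
    by_contra hcon
    have := hmin (w i) (not_le.1 hcon)
    rw [e] at this
    grind
  by_cases hqa : w a = q
  -- The arc `(a, a + 1)` is deleted.
  · have hqa' : w q = a := by rw [← hqa, e]
    have hd := down_of_eq hq hw hqa
    have d1 : down a q w a = a := by simp [hd, hqa']
    have d2 : down a q w q = q := by simp [hd, hqa]
    have d3 : ∀ x, x ≠ a → x ≠ q → down a q w x = w x := fun x h1 h2 => by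
      simp [hd, swap_apply_of_ne_of_ne h1 h2]
    refine ⟨a, q, hq, by omega, ?_⟩
    clear hd h1
    generalize down a q w = v at d1 d2 d3 ⊢
    refine ⟨?_, h.of_arcs id ?_ ?_ ?_⟩
    · rintro ⟨i, hi, hi'⟩
      grind
    · clear hmin hge e h
      grind
    · clear hmin hge e h
      grind
    · clear hge e h
      grind
  · by_cases hqq : w q = q
    -- The arc `(a, w a)` is shortened to `(a + 1, w a)`.
    · have hd := down_of_gt_of_ne hq hw (by grind) hqa
      have d1 : down a q w a = a := by simp [hd, hqq]
      have d2 : down a q w q = w a := by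
        simp [hd, swap_apply_of_ne_of_ne ha hqa]
      have d3 : down a q w (w a) = q := by
        simp [hd, swap_apply_of_ne_of_ne ha hqa, e]
      have d4 : ∀ x, x ≠ a → x ≠ q → x ≠ w a → down a q w x = w x := fun x h1 h2 h3 => by
        have h4 : w x ≠ a := fun h => h3 (by rw [← h, e])
        have h5 : w x ≠ q := fun h => h2 (by rw [← e x, h, hqq])
        simp [hd, swap_apply_of_ne_of_ne, h1, h2, h4, h5]
      refine ⟨a, q, hq, by grind, ?_⟩
      clear hd h1
      generalize down a q w = v at d1 d2 d3 d4 ⊢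
      refine ⟨?_, h.of_arcs (fun x => if x = q then a else x) ?_ ?_ ?_⟩
      · rintro ⟨i, hi, hi'⟩
        grind
      · clear e h
        grind
      · clear e h
        grind
      · clear e h
        grind
    -- The arcs `(a, a + 2)` and `(a + 1, w (a + 1))` become `(a, a + 1)` and
    -- `(a + 2, w (a + 1))`.
    · have hqw : q < w q := by
        have := hge q (by omega)
        have : w q ≠ a := fun h => hqa (by rw [← h, e])
        grind
      have hab := h.not_nested a q (by omega) hqw
      obtain ⟨r, hr⟩ : ∃ r : Fin n, (r : ℕ) = q + 1 := ⟨⟨q + 1, by omega⟩, rfl⟩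
      -- Otherwise `a + 2` lies under the arcs of `a` and `a + 1`, so it would close one
      -- of them, but their closers are larger.
      have hra : w a = r := by
        by_contra hne
        have h3 := h.closes a q r (by omega) (by omega) (by omega) (by omega)
        have h4 := hge r (by omega)
        have : w r ≠ a := fun h => hne (by rw [← h, e])
        have h5 : w r = q := by omega
        have : w q = r := by rw [← h5, e]
        omega
      have hra' : w r = a := by rw [← hra, e]
      have hd := down_of_gt_of_ne hr hw (by omega) (by omega)
      have d1 : down q r w a = q := by
        rw [hd]; simp [swap_apply_of_ne_of_ne (show a ≠ q by omega) (show a ≠ r by omega), hra]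
      have d2 : down q r w q = a := by
        rw [hd]; simp [swap_apply_of_ne_of_ne (show a ≠ q by omega) (show a ≠ r by omega), hra']
      have d3 : down q r w r = w q := by
        rw [hd]
        simp [swap_apply_of_ne_of_ne (show w q ≠ q by omega) (show w q ≠ r by omega)]
      have d4 : down q r w (w q) = r := by
        rw [hd]
        simp [swap_apply_of_ne_of_ne (show w q ≠ q by omega) (show w q ≠ r by omega), e]
      have d5 : ∀ x, x ≠ a → x ≠ q → x ≠ r → x ≠ w q → down q r w x = w x :=
        fun x h1 h2 h3 h4 => by
        have h5 : w x ≠ q := fun h => h4 (by rw [← h, e])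
        have h6 : w x ≠ r := fun h => h1 (by rw [← e x, h, hra'])
        simp [hd, swap_apply_of_ne_of_ne, h2, h3, h5, h6]
      refine ⟨q, r, hr, by omega, ?_⟩
      clear hd h1
      generalize down q r w = v at d1 d2 d3 d4 d5 ⊢
      refine ⟨?_, h.of_arcs (fun x => if x = r then q else x) ?_ ?_ ?_⟩
      · rintro ⟨i, hi, hi'⟩
        grind
      · clear e h
        grind
      · clear e h
        grind
      · clear e h
        grind

end Patterns

/-! ### The ideal below an involution -/

section Main

variable {n : ℕ}

open Classical in
/-- The set of cuts crossed by `u`. -/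
noncomputable def support (u : Perm (Fin n)) : Finset (Fin n) :=
  Finset.univ.filter fun k => Crosses u k

theorem mem_support {u : Perm (Fin n)} {k : Fin n} : k ∈ support u ↔ Crosses u k := by
  simp [support]

theorem Br.support_subset {u w : Perm (Fin n)} (h : Br u w) : support u ⊆ support w :=
  fun _ hk => mem_support.2 (h.crosses (mem_support.1 hk))

theorem support_down {p q : Fin n} (hpq : (q : ℕ) = p + 1) {u : Perm (Fin n)}
    (hu : IsInvolution u) (hp : ¬ Crosses (down p q u) p) :
    support (down p q u) = (support u).erase p := by
  ext k
  rw [Finset.mem_erase, mem_support, mem_support]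
  by_cases hk : k = p
  · subst hk
    simp [hp]
  · simp [crosses_down hpq hu hk, hk]

theorem support_up {p q : Fin n} (hpq : (q : ℕ) = p + 1) {u : Perm (Fin n)}
    (hu : IsInvolution u) : support (up p q u) = insert p (support u) := by
  ext k
  rw [Finset.mem_insert, mem_support, mem_support]
  by_cases hk : k = p
  · subst hk
    simp [crosses_up_self hpq]
  · simp [crosses_up hpq hu hk, hk]

/-- For a sparse involution `w`, every subset of its support is the support of an involution below
`w`, and inclusion of supports reflects the Bruhat order below `w`. -/
theorem Sparse.ideal_iso {w : Perm (Fin n)} (hw : IsInvolution w) (h : Sparse w) :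
    (∀ S ⊆ support w, ∃ u, IsInvolution u ∧ Br u w ∧ support u = S) ∧
    ∀ u v, IsInvolution u → IsInvolution v → Br u w → Br v w → support u ⊆ support v →
      Br u v := by
  induction hN : invCount w using Nat.strong_induction_on generalizing w with
  | _ N ih =>
  by_cases h1 : w = 1
  · subst h1
    refine ⟨fun S hS => ⟨1, hw, ReflTransGen.refl, ?_⟩, fun u v _ _ hu _ _ => ?_⟩
    · have : support (1 : Perm (Fin n)) = ∅ := by
        ext k
        simp [mem_support, not_crosses_one]
      rw [this] at hS ⊢
      exact (Finset.subset_empty.1 hS).symm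
    · rw [hu.antisymm (one_br u)]
      exact one_br v
  obtain ⟨p, q, hpq, hd, hcr, hsp⟩ := h.exists_down hw h1
  have hlt : p < q := by omega
  have hinv : invCount (down p q w) < N := by
    rcases (down_le hlt w).invCount_lt_or_eq with h2 | h2
    · exact hN ▸ h2
    · exfalso
      apply hcr
      rw [h2, ← up_down hpq hw hd]
      exact crosses_up_self hpq _
  obtain ⟨ihS, ihO⟩ := ih _ hinv (hw.down hpq) hsp rfl
  have hncr : ∀ u, Br u w → ¬ Crosses (down p q u) p := fun u hu hc =>
    hcr ((hu.down hpq).crosses hc)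
  refine ⟨fun S hS => ?_, fun u v hu hv huw hvw hsub => ?_⟩
  · obtain ⟨u, hu, huw, hus⟩ := ihS (S.erase p) (by
      rw [support_down hpq hw hcr]
      exact Finset.erase_subset_erase p hS)
    by_cases hp : p ∈ S
    · refine ⟨up p q u, hu.up hpq, ?_, ?_⟩
      · have := huw.up hpq
        rwa [up_down hpq hw hd] at this
      · rw [support_up hpq hu, hus, Finset.insert_erase hp]
    · exact ⟨u, hu, huw.trans (down_le hlt w), by rw [hus, Finset.erase_eq_of_notMem hp]⟩
  · have hD : Br (down p q u) (down p q v) := by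
      refine ihO _ _ (hu.down hpq) (hv.down hpq) (huw.down hpq) (hvw.down hpq) ?_
      rw [support_down hpq hu (hncr u huw), support_down hpq hv (hncr v hvw)]
      exact Finset.erase_subset_erase p hsub
    rcases mul_swap_cases hlt u with hu' | hu'
    · rw [down_of_lt hu hu'] at hD
      exact hD.trans (down_le hlt v)
    · have hpu : Crosses u p := (swap_le_of_descent hpq hu').crosses (crosses_swap hlt)
      have hpv : Crosses v p := mem_support.1 (hsub (mem_support.2 hpu))
      have hv' : v q < v p := by
        rcases mul_swap_cases hlt v with hv' | hv'
        · exact absurd ((down_of_lt hv hv').symm ▸ hpv) (hncr v hvw)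
        · exact hv'
      have := hD.up hpq
      rwa [up_down hpq hu hu', up_down hpq hv hv'] at this

theorem Sparse.isBoolean {w : Perm (Fin n)} (hw : IsInvolution w) (h : Sparse w) :
    IsBooleanInvolution w := by
  obtain ⟨hS, hO⟩ := h.ideal_iso hw
  let e := (support w).equivFin
  have hle : ∀ a : {u : Perm (Fin n) // IsInvolution u ∧ BruhatLE u w}, Br a.1 w :=
    fun a => (bruhatLE_iff_br _ _).1 a.2.2
  let f : {u : Perm (Fin n) // IsInvolution u ∧ BruhatLE u w} →
      Finset (Fin (support w).card) :=
    fun u => Finset.univ.filter fun x => (e.symm x).1 ∈ support u.1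
  have hf : ∀ a b, BruhatLE a.1 b.1 ↔ f a ⊆ f b := by
    intro a b
    rw [bruhatLE_iff_br]
    constructor
    · intro hab x hx
      simp only [f, Finset.mem_filter, Finset.mem_univ, true_and] at hx ⊢
      exact hab.support_subset hx
    · intro hab
      refine hO _ _ a.2.1 b.2.1 (hle a) (hle b) fun k hk => ?_
      have := @hab (e ⟨k, (hle a).support_subset hk⟩) (by simpa [f] using hk)
      simpa [f] using this
  refine ⟨_, Equiv.ofBijective f ⟨?_, ?_⟩, hf⟩
  · intro a b hab
    have h1 := (bruhatLE_iff_br _ _).1 ((hf a b).2 hab.subset)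
    have h2 := (bruhatLE_iff_br _ _).1 ((hf b a).2 hab.symm.subset)
    exact Subtype.ext (h1.antisymm h2)
  · intro T
    obtain ⟨u, hu, huw, hus⟩ := hS (T.map (e.symm.toEmbedding.trans (Function.Embedding.subtype _)))
      (by
        intro k hk
        obtain ⟨x, -, rfl⟩ := Finset.mem_map.1 hk
        exact (e.symm x).2)
    refine ⟨⟨u, hu, (bruhatLE_iff_br _ _).2 huw⟩, ?_⟩
    ext x
    simp [f, hus]

/-- In a Boolean ideal, `w` is the only element crossing all the cuts of `w`. If `v` were another
one, some atom would lie below `w` and not below `v`; but every atom is a simple transposition, and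
those below `w` are below `v`. -/
theorem IsBooleanInvolution.eq_of_crosses {w : Perm (Fin n)} (hw : IsInvolution w)
    (hB : IsBooleanInvolution w) {v : Perm (Fin n)} (hv : IsInvolution v) (hvw : Br v w)
    (hs : ∀ k, Crosses w k → Crosses v k) : v = w := by
  obtain ⟨m, f, hf⟩ := hB
  have hf' : ∀ a b, Br a.1 b.1 ↔ f a ⊆ f b := fun a b => by rw [← bruhatLE_iff_br, hf]
  let V : {u : Perm (Fin n) // IsInvolution u ∧ BruhatLE u w} :=
    ⟨v, hv, (bruhatLE_iff_br _ _).2 hvw⟩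
  let W : {u : Perm (Fin n) // IsInvolution u ∧ BruhatLE u w} :=
    ⟨w, hw, (bruhatLE_iff_br _ _).2 ReflTransGen.refl⟩
  by_contra hne
  have hnot : ¬ f W ⊆ f V := fun h => hne (hvw.antisymm ((hf' W V).2 h))
  obtain ⟨x, hxW, hxV⟩ := Finset.not_subset.1 hnot
  obtain ⟨s, hs'⟩ := f.surjective {x}
  have hsw : Br s.1 w := (hf' s W).2 (by rw [hs']; simpa using hxW)
  have hs1 : s.1 ≠ 1 := by
    intro h1
    have := (hf' s V).1 (by rw [h1]; exact one_br _)
    rw [hs'] at this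
    exact hxV (by simpa using this)
  obtain ⟨p, q, hpq, hd⟩ := exists_descent hs1
  have hlt : p < q := by omega
  have hle := swap_le_of_descent hpq hd
  let s' : {u : Perm (Fin n) // IsInvolution u ∧ BruhatLE u w} :=
    ⟨swap p q, swap_mul_self p q, (bruhatLE_iff_br _ _).2 (hle.trans hsw)⟩
  have hsub : f s' ⊆ {x} := hs' ▸ (hf' s' s).1 hle
  have hs'V : f s' ⊆ f V :=
    (hf' s' V).1 (swap_le_of_crosses hpq (hs p (Br.crosses (hle.trans hsw) (crosses_swap hlt))))
  rcases Finset.subset_singleton_iff.1 hsub with h0 | h0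
  · have h2 : Br (swap p q) 1 := by
      have := (hf' s' ⟨1, one_mul 1, (bruhatLE_iff_br _ _).2 (one_br w)⟩).2 (by simp [h0])
      exact this
    exact not_crosses_one p (h2.crosses (crosses_swap hlt))
  · rw [h0] at hs'V
    exact hxV (by simpa using hs'V)

/-- In a Boolean ideal, deleting an arc of `w` must lose a cut, so every arc has a cut crossed by
no other arc. -/
theorem IsBooleanInvolution.exists_cut_of_arc {w : Perm (Fin n)} (hw : IsInvolution w)
    (hB : IsBooleanInvolution w) {b : Fin n} (hb : b < w b) :
    ∃ k, b ≤ k ∧ k < w b ∧ ∀ i ≤ k, i ≠ b → ¬ k < w i := by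
  by_contra! hcon
  have hinv : IsInvolution (w * swap b (w b)) := hw.mul_swap (mul_swap_eq_of_apply_eq hw rfl)
  have hle : Br (w * swap b (w b)) w :=
    ReflTransGen.single ⟨b, w b, hb, by simpa [hw.apply_apply] using hb, by simp [mul_assoc]⟩
  have heq := hB.eq_of_crosses hw hinv hle (by
    rintro k ⟨i, hik, hki⟩
    have key : ∃ j ≤ k, j ≠ b ∧ k < w j := by
      by_cases hi : i = b
      · subst hi
        exact hcon k hik hki
      · exact ⟨i, hik, hi, hki⟩
    obtain ⟨j, hj, hjb, hkj⟩ := key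
    refine ⟨j, hj, ?_⟩
    have hj2 : j ≠ w b := by
      rintro rfl
      rw [hw.apply_apply] at hkj
      grind
    simpa [swap_apply_of_ne_of_ne hjb hj2] using hkj)
  have := congrArg (fun g : Perm (Fin n) => g b) heq
  simp [hw.apply_apply] at this
  exact hb.ne this

/-- If `w` is Boolean, nested arcs, and three arcs over a common cut with a third opener under the
first two, contradict `exists_cut_of_arc`; a fixed point under two arcs contradicts
`eq_of_crosses`. -/
theorem IsBooleanInvolution.sparse {w : Perm (Fin n)} (hw : IsInvolution w)
    (hB : IsBooleanInvolution w) : Sparse w := by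
  have e := hw.apply_apply
  have hA : ∀ a b, a < b → b < w b → w a < w b := by
    intro a b hab hb
    obtain ⟨k, h1, h2, h3⟩ := hB.exists_cut_of_arc hw hb
    have := h3 a (by grind) hab.ne
    grind
  refine ⟨hA, ?_⟩
  intro a b c hab hbc hca hcb
  by_contra hcon
  have hab' := hA a b hab (hbc.trans hcb)
  rcases (not_lt.1 hcon).eq_or_lt with hc | hc
  · have hc' : w c = c := hc.symm
    -- Shortening the arc `(a, w a)` to `(a, c)` loses no cut, since `(b, w b)` crosses all cuts
    -- between `c` and `w a`.
    let v := swap c (w a) * w * swap c (w a)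
    have hv : IsInvolution v := hw.conj c (w a)
    have hac : a ≠ c := (hab.trans hbc).ne
    have haa : a ≠ w a := ((hab.trans hbc).trans hca).ne
    have va : v a = c := by simp [v, swap_apply_of_ne_of_ne hac haa]
    have vc : v c = a := by simp [v, e, swap_apply_of_ne_of_ne hac haa]
    have vo : ∀ i, i ≠ a → i ≠ c → i ≠ w a → v i = w i := by
      intro i h1 h2 h3
      have h4 : w i ≠ c := fun h => h2 (by rw [← e i, h, hc'])
      have h5 : w i ≠ w a := fun h => h1 (w.injective h)
      simp [v, swap_apply_of_ne_of_ne h2 h3, swap_apply_of_ne_of_ne h4 h5]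
    have vwa : v (w a) = w a := by simp [v, hc', swap_apply_left]
    have hle : Br v w := by
      have s1 : BStep v (v * swap a (w a)) :=
        ⟨a, w a, by grind, by rw [va, vwa]; exact hca, rfl⟩
      have s2 : BStep (v * swap a (w a)) (v * swap a (w a) * swap c (w a)) := by
        refine ⟨c, w a, hca, ?_, rfl⟩
        simp [swap_apply_of_ne_of_ne hac.symm hca.ne, vc, va]
        grind
      have : v * swap a (w a) * swap c (w a) = w := by
        ext i
        congr 1
        simp only [Perm.coe_mul, Function.comp_apply, swap_apply_def]
        grind
      rw [this] at s2
      exact (ReflTransGen.single s1).tail s2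
    have heq := hB.eq_of_crosses hw hv hle (by
      rintro k ⟨i, hik, hki⟩
      by_cases hia : i = a
      · subst hia
        by_cases hkc : k < c
        · exact ⟨i, hik, by rwa [va]⟩
        · exact ⟨b, by grind, by rw [vo b (by grind) (by grind) (by grind)]; grind⟩
      · exact ⟨i, hik, by rw [vo i hia (by grind) (by grind)]; exact hki⟩)
    rw [heq] at va
    exact hca.ne va.symm
  · have hbc' := hA b c hbc hc
    obtain ⟨k, h1, h2, h3⟩ := hB.exists_cut_of_arc hw (hbc.trans hcb)
    -- A cut crossed only by `(b, w b)` would lie after `w a` and before `c`, but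
    -- `c < w a`.
    have := h3 a (by grind) hab.ne
    have := h3 c (by grind) hbc.ne'
    grind

end Main

/-- An involution `w ∈ I(Sₙ)` is Boolean if and only if `w` avoids the patterns
4321, 45312 and 456123. -/
theorem boolean_involution_iff_avoids {n : ℕ} (w : Equiv.Perm (Fin n))
    (hw : IsInvolution w) :
    IsBooleanInvolution w ↔
      ¬ ContainsPattern w p4321 ∧ ¬ ContainsPattern w p45312 ∧ ¬ ContainsPattern w p456123 :=
  (⟨fun hB => hB.sparse hw, fun h => h.isBoolean hw⟩ : IsBooleanInvolution w ↔ Sparse w).trans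
    (sparse_iff_avoids hw)
end

section
/- Let (W,S) be a Coxeter system and let w be an involution in W. The following are equivalent: (i) w is Boolean; (ii) no reduced S̲-expression for w has a repeated letter; (iii) there exists an S̲-expression for w without repeated letters. -/
/-!
Write `W_J` for the parabolic subgroup generated by the simple reflections indexed by `J`.

Two general facts about Coxeter groups carry the proof. The strong exchange condition
(`strong_exchange`) comes from the action of `W` on signed elements by conjugation, where the sign
counts occurrences in the inversion sequence. It gives the lifting property of the Bruhat order
(`CoxBruhatLE.lift`) and its description by subwords (`CoxBruhatLE.exists_sublist`,
`coxBruhatLE_of_sublist`). A reflection representation shows that `s_i ∈ W_J` only if `i ∈ J`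
(`mem_of_inParabolic_simple`). Together they yield: if `v` and `s_i v s_i` lie in `W_J` and `i ∉ J`,
then `s_i` commutes with `v` (`InParabolic.conj_eq_of_conj_mem`).

(iii) implies (i). Let `l` be an expression for `w` without repeated letters. By induction on the
last letter, which lies outside the parabolic subgroup of the preceding ones, the involutions below
`w` are precisely the values of the subwords of `l` (`exists_sublist_of_le_underlineProd`,
`underlineProd_le_of_sublist`). Letters of a subword are simple reflections below its value, so the
Bruhat order on these values is inclusion of the sets of letters (`coxBoolean_of_nodup`).

(i) implies (ii). Let the ideal of `w` be isomorphic to the subsets of a set with `m` elements.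
Every nontrivial involution arises by the action of one letter from a smaller involution
(`exists_underlineAct_eq`), so `w` has an expression of length at most `m`
(`exists_underlineProd_length_le`). On the other hand the `m` atoms of the ideal are simple
reflections below `w`, whose letters occur in every expression for `w`
(`le_card_toFinset_of_coxBoolean`). So a reduced expression has at most `m` letters and at least `m`
distinct ones.

(ii) implies (iii) because every involution has a reduced expression (`exists_isReducedSExpr`).
-/

open scoped Classical

variable {B W : Type*} [Group W] {M : CoxeterMatrix B}

/-- The right action of the symbol `s̲` (for `s = cs.simple i`) on `W`:
`w · s̲ = w s` if `s w s = w`, and `w · s̲ = s w s` otherwise. -/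
noncomputable def underlineAct (cs : CoxeterSystem M W) (w : W) (i : B) : W :=
  if cs.simple i * w * cs.simple i = w then w * cs.simple i
  else cs.simple i * w * cs.simple i

/-- The result of acting on the identity by the word `s̲_{l₁} ⋯ s̲_{l_k}`. -/
noncomputable def underlineProd (cs : CoxeterSystem M W) (l : List B) : W :=
  l.foldl (underlineAct cs) 1

/-- `l` is an `S̲`-expression for `w`. -/
def IsSExpr (cs : CoxeterSystem M W) (l : List B) (w : W) : Prop :=
  underlineProd cs l = w

/-- `l` is a reduced `S̲`-expression for `w`: an `S̲`-expression of minimal length. -/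
def IsReducedSExpr (cs : CoxeterSystem M W) (l : List B) (w : W) : Prop :=
  IsSExpr cs l w ∧ ∀ l' : List B, IsSExpr cs l' w → l.length ≤ l'.length

/-- The Bruhat order on `W`: `u ≤ w` iff `w = u t₁ ⋯ tₘ` for reflections
`t₁, …, tₘ` such that the Coxeter length strictly increases along the partial
products `u t₁ ⋯ tᵢ`. -/
def CoxBruhatLE (cs : CoxeterSystem M W) (u w : W) : Prop :=
  ∃ ts : List W, (∀ t ∈ ts, cs.IsReflection t) ∧
    w = ts.foldl (· * ·) u ∧
    ∀ k, k + 1 ≤ ts.length →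
      cs.length ((ts.take k).foldl (· * ·) u) < cs.length ((ts.take (k + 1)).foldl (· * ·) u)

/-- An involution `w ∈ I(W)` is Boolean if the principal order ideal
`{u ∈ I(W) : u ≤ w}` of the Bruhat order on involutions is isomorphic, as a poset,
to the Boolean lattice of all subsets of some finite set. -/
def CoxBoolean (cs : CoxeterSystem M W) (w : W) : Prop :=
  ∃ (m : ℕ) (f : {u : W // u * u = 1 ∧ CoxBruhatLE cs u w} ≃ Finset (Fin m)),
    ∀ a b, CoxBruhatLE cs a.1 b.1 ↔ f a ⊆ f b

/-! ### The geometric representation -/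

section Geometric

open Real

/-- The entries of a symmetric form attached to `M`.  Only the order of `σ_i σ_j` dividing `M i j`
matters below, so pairs with `M i j` even (including `M i j = 0`, which encodes `∞`) are made
orthogonal; for `M i j` odd this is the usual `-2 cos (π / M i j)`, and the diagonal is `2`. -/
noncomputable def cartanEntry (M : CoxeterMatrix B) (i j : B) : ℝ :=
  if i = j then 2 else if Even (M i j) then 0 else -2 * cos (π / M i j)

/-- The simple coroot of `i`, a linear form on the space with basis the simple roots. -/
noncomputable def simpleCoroot (M : CoxeterMatrix B) (i : B) : Module.Dual ℝ (B →₀ ℝ) :=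
  Finsupp.linearCombination ℝ (cartanEntry M i)

theorem simpleCoroot_single (M : CoxeterMatrix B) (i j : B) :
    simpleCoroot M i (Finsupp.single j 1) = cartanEntry M i j := by
  simp [simpleCoroot]

theorem simpleCoroot_self (M : CoxeterMatrix B) (i : B) :
    simpleCoroot M i (Finsupp.single i 1) = 2 := by
  rw [simpleCoroot_single, cartanEntry, if_pos rfl]

/-- The reflection by which `i` acts in the representation. -/
noncomputable def geomReflection (M : CoxeterMatrix B) (i : B) :
    (B →₀ ℝ) ≃ₗ[ℝ] (B →₀ ℝ) :=
  Module.reflection (simpleCoroot_self M i)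

theorem geomReflection_apply (M : CoxeterMatrix B) (i : B) (x : B →₀ ℝ) :
    geomReflection M i x = x - simpleCoroot M i x • Finsupp.single i 1 :=
  Module.reflection_apply _ _

/-- The braid relations. For `M i j` even the two reflections commute, so the relation holds already
with exponent `2`; for `M i j` odd their product is a rotation, and the power formula in terms of
Chebyshev polynomials applies. -/
theorem geomReflection_liftable (M : CoxeterMatrix B) : M.IsLiftable (geomReflection M) := by
  intro i j
  by_cases hij : i = j
  · subst hij
    rw [M.diagonal, pow_one]
    ext1 x
    simp only [LinearEquiv.mul_apply, geomReflection_apply, map_sub, map_smul,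
      simpleCoroot_self, LinearEquiv.coe_one, id]
    module
  have hfg : simpleCoroot M i (Finsupp.single j 1) = cartanEntry M i j := simpleCoroot_single ..
  have hgf : simpleCoroot M j (Finsupp.single i 1) = cartanEntry M i j := by
    rw [simpleCoroot_single, cartanEntry, cartanEntry, M.symmetric j i]
    simp [hij, Ne.symm hij]
  rcases Nat.even_or_odd' (M i j) with ⟨p, hp | hp⟩
  · have h0 : cartanEntry M i j = 0 := by simp [cartanEntry, hij, hp]
    rw [h0] at hfg hgf
    have h2 : (geomReflection M i * geomReflection M j) ^ 2 = 1 := by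
      ext1 x
      rw [pow_two]
      simp only [LinearEquiv.mul_apply, geomReflection_apply, map_sub, map_smul, hfg, hgf,
        simpleCoroot_self, LinearEquiv.coe_one, id]
      module
    rw [hp, pow_mul, h2, one_pow]
  · have hm1 : M i j ≠ 1 := M.off_diagonal i j hij
    have hp1 : 1 ≤ p := by omega
    have hmR : (M i j : ℝ) = 2 * p + 1 := by rw [hp]; push_cast; ring
    have hpR : (1 : ℝ) ≤ p := by exact_mod_cast hp1
    have ha : cartanEntry M i j = -2 * cos (π / M i j) := by
      have : ¬ Even (M i j) := by rw [hp]; simp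
      simp [cartanEntry, hij, this]
    set θ : ℝ := 2 * (π / M i j) with hθ
    have ht : 2 * cos θ = cartanEntry M i j * cartanEntry M i j - 2 := by
      rw [ha, hθ, cos_two_mul]; ring
    have hθm : θ * (2 * p + 1) = 2 * π := by
      rw [hθ, hmR]; field_simp
    have hsin : sin θ ≠ 0 := by
      apply ne_of_gt
      apply sin_pos_of_pos_of_lt_pi
      · rw [hθ, hmR]; positivity
      · nlinarith [pi_pos]
    -- `S_p + S_{p-1}` vanishes at `2 cos θ`, since `(p + 1) θ + p θ = 2 π`.
    have hS : (Polynomial.Chebyshev.S ℝ (p : ℤ)).eval (2 * cos θ) +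
        (Polynomial.Chebyshev.S ℝ ((p : ℤ) - 1)).eval (2 * cos θ) = 0 := by
      have h1 := Polynomial.Chebyshev.S_two_mul_real_cos θ (p : ℤ)
      have h2 := Polynomial.Chebyshev.S_two_mul_real_cos θ ((p : ℤ) - 1)
      have h3 : sin ((((p : ℤ) : ℝ) + 1) * θ) = - sin (((((p : ℤ) - 1 : ℤ) : ℝ) + 1) * θ) := by
        have : (((p : ℤ) : ℝ) + 1) * θ = 2 * π - ((((p : ℤ) - 1 : ℤ) : ℝ) + 1) * θ := by
          push_cast; linarith
        rw [this, sin_two_pi_sub]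
      apply mul_right_cancel₀ hsin
      rw [add_mul, h1, h2, h3]; ring
    ext1 x
    have key := Module.reflection_mul_reflection_pow_apply (simpleCoroot_self M i)
      (simpleCoroot_self M j) (M i j) x (2 * cos θ) (by rw [hfg, hgf]; exact ht)
    have e1 : ((M i j : ℤ) - 1) / 2 = p := by omega
    have e2 : ((M i j : ℤ) - 3) / 2 = p - 1 := by omega
    have e3 : (M i j : ℤ) / 2 = p := by omega
    have e4 : ((M i j : ℤ) - 2) / 2 = p - 1 := by omega
    rw [e1, e2, e3, e4, hS] at key
    simpa using! key

/-- The representation of `W` in which `s_i` acts as the reflection `geomReflection M i`; a variant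
of the geometric representation, which need not be faithful. -/
noncomputable def geomRep (cs : CoxeterSystem M W) : W →* ((B →₀ ℝ) ≃ₗ[ℝ] (B →₀ ℝ)) :=
  cs.lift ⟨geomReflection M, geomReflection_liftable M⟩

/-- `w` lies in the standard parabolic subgroup generated by the simple reflections in `J`. -/
def InParabolic (cs : CoxeterSystem M W) (J : Set B) (w : W) : Prop :=
  ∃ ω : List B, (∀ i ∈ ω, i ∈ J) ∧ cs.wordProd ω = w

/-- A word without the letter `i` preserves the coefficient of the simple root of `i`, whereas
`s_i` negates that root; in particular distinct letters give distinct simple reflections. -/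
theorem mem_of_inParabolic_simple (cs : CoxeterSystem M W) {J : Set B} {i : B}
    (h : InParabolic cs J (cs.simple i)) : i ∈ J := by
  by_contra hi
  obtain ⟨ω, hω, hprod⟩ := h
  have key : ∀ ω : List B, (∀ j ∈ ω, j ∈ J) → ∀ x, (geomRep cs (cs.wordProd ω) x) i = x i := by
    intro ω
    induction ω with
    | nil => intro _ x; simp
    | cons j ω ih =>
      intro h x
      have hj : j ≠ i := by rintro rfl; exact hi (h j (by simp))
      rw [cs.wordProd_cons, map_mul, LinearEquiv.mul_apply, geomRep, cs.lift_apply_simple,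
        geomReflection_apply]
      have := ih (fun k hk => h k (by simp [hk])) x
      rw [geomRep] at this
      simp [this, hj]
  have h1 := key ω hω (Finsupp.single i 1)
  rw [hprod, geomRep, cs.lift_apply_simple, geomReflection_apply, simpleCoroot_self] at h1
  norm_num at h1

end Geometric

/-! ### The strong exchange condition -/

section Exchange

/-- The signed conjugation action of a simple reflection: `t` is conjugated, and the sign
(recorded additively) flips exactly when `t` is the simple reflection itself. -/
noncomputable def signedConj (cs : CoxeterSystem M W) (i : B) : Function.End (W × ZMod 2) :=
  fun p => (cs.simple i * p.1 * cs.simple i, p.2 + if p.1 = cs.simple i then 1 else 0)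

/-- Along the powers of `s_i s_j` the sign counts the hits of `t` among the elements
`s_j (s_i s_j) ^ q`. Over a full period `M i j` each is met twice, which yields the braid
relations. -/
theorem signedConj_mul_pow (cs : CoxeterSystem M W) (i j : B) (k : ℕ) (t : W) (ε : ZMod 2) :
    ((signedConj cs i * signedConj cs j) ^ k) (t, ε) =
      ((cs.simple i * cs.simple j) ^ k * t * ((cs.simple i * cs.simple j) ^ k)⁻¹,
        ε + ∑ q ∈ Finset.range (2 * k),
          if t = cs.simple j * (cs.simple i * cs.simple j) ^ q then 1 else 0) := by
  induction k with
  | zero => simp; rfl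
  | succ k ih =>
    set a := cs.simple i with ha
    set b := cs.simple j with hb
    have haa : a * a = 1 := cs.simple_mul_simple_self i
    have hbb : b * b = 1 := cs.simple_mul_simple_self j
    have ha' : a⁻¹ = a := cs.inv_simple i
    have hb' : b⁻¹ = b := cs.inv_simple j
    -- conjugation by `b` inverts the rotation `a b`
    have hcb : ∀ q : ℕ, ((a * b) ^ q)⁻¹ * b = b * (a * b) ^ q := by
      intro q
      have h1 : b * (a * b) * b⁻¹ = (a * b)⁻¹ := by
        rw [mul_inv_rev, ha', hb', mul_assoc, mul_assoc, hbb, mul_one]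
      have h2 : b * (a * b) ^ q * b⁻¹ = ((a * b) ^ q)⁻¹ := by
        rw [← conj_pow, h1, inv_pow]
      rw [← h2, hb', mul_assoc _ b b, hbb, mul_one]
    set c := a * b with hc
    have e1 : c ^ k * t * (c ^ k)⁻¹ = b ↔ t = b * c ^ (2 * k) := by
      have : b * c ^ (2 * k) = (c ^ k)⁻¹ * b * c ^ k := by
        rw [hcb, mul_assoc, ← pow_add, two_mul]
      rw [this]
      constructor
      · intro h; rw [← h]; group
      · intro h; rw [h]; group
    have e2 : b * (c ^ k * t * (c ^ k)⁻¹) * b = a ↔ t = b * c ^ (2 * k + 1) := by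
      have : b * c ^ (2 * k + 1) = (c ^ k)⁻¹ * (b * a * b) * c ^ k := by
        have h3 : b * a * b = b * c := by rw [hc, mul_assoc]
        rw [h3, ← mul_assoc, hcb, mul_assoc, mul_assoc, ← pow_succ', ← pow_add]
        congr 2; ring
      rw [this]
      constructor
      · intro h; rw [← h]
        have : b * (b * (c ^ k * t * (c ^ k)⁻¹) * b) * b = c ^ k * t * (c ^ k)⁻¹ := by
          calc _ = (b * b) * (c ^ k * t * (c ^ k)⁻¹) * (b * b) := by group
            _ = _ := by rw [hbb]; group
        rw [this]; group
      · intro h; rw [h]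
        calc _ = (b * b) * a * (b * b) := by group
          _ = _ := by rw [hbb]; group
    rw [pow_succ']
    change signedConj cs i (signedConj cs j (((signedConj cs i * signedConj cs j) ^ k) (t, ε))) = _
    rw [ih]
    simp only [signedConj, ← ha, ← hb]
    rw [if_congr e1 rfl rfl, if_congr e2 rfl rfl, Nat.mul_succ, Finset.sum_range_succ,
      Finset.sum_range_succ]
    refine Prod.ext ?_ ?_
    · simp only [pow_succ', mul_inv_rev, hc, ha', hb', mul_assoc]
    · simp only [add_assoc]

theorem signedConj_liftable (cs : CoxeterSystem M W) : M.IsLiftable (signedConj cs) := by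
  intro i j
  funext ⟨t, ε⟩
  rw [signedConj_mul_pow, cs.simple_mul_simple_pow, two_mul, Finset.sum_range_add]
  simp only [pow_add, cs.simple_mul_simple_pow, one_mul, CharTwo.add_self_eq_zero]
  simp; rfl

/-- The action of `W` on signed elements extending `signedConj`. -/
noncomputable def signedRep (cs : CoxeterSystem M W) : W →* Function.End (W × ZMod 2) :=
  cs.lift ⟨signedConj cs, signedConj_liftable cs⟩

theorem signedRep_simple (cs : CoxeterSystem M W) (i : B) :
    signedRep cs (cs.simple i) = signedConj cs i := cs.lift_apply_simple _ _

/-- The sign picked up by `t` counts its occurrences in the right inversion sequence of any word,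
so their parity depends only on the product of the word. -/
theorem signedRep_wordProd (cs : CoxeterSystem M W) (ω : List B) (t : W) (ε : ZMod 2) :
    signedRep cs (cs.wordProd ω) (t, ε) =
      (cs.wordProd ω * t * (cs.wordProd ω)⁻¹, ε + (cs.rightInvSeq ω).count t) := by
  induction ω with
  | nil => simp; rfl
  | cons i ω ih =>
    rw [cs.wordProd_cons, map_mul]
    change signedRep cs (cs.simple i) (signedRep cs (cs.wordProd ω) (t, ε)) = _
    rw [ih, signedRep_simple, signedConj]
    refine Prod.ext ?_ ?_
    · simp [mul_assoc]
    · have : cs.wordProd ω * t * (cs.wordProd ω)⁻¹ = cs.simple i ↔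
          (cs.wordProd ω)⁻¹ * cs.simple i * cs.wordProd ω = t := by
        constructor
        · intro h; rw [← h]; group
        · intro h; rw [← h]; group
      simp only [CoxeterSystem.rightInvSeq, List.count_cons, this, beq_iff_eq]
      push_cast
      ring

theorem signedRep_fst (cs : CoxeterSystem M W) (w t : W) (ε : ZMod 2) :
    (signedRep cs w (t, ε)).1 = w * t * w⁻¹ := by
  obtain ⟨ω, rfl⟩ := cs.wordProd_surjective w
  rw [signedRep_wordProd]

/-- The parity of the number of occurrences of `t` in a right inversion sequence of `w`. -/
noncomputable def invParity (cs : CoxeterSystem M W) (w t : W) : ZMod 2 :=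
  (signedRep cs w (t, 0)).2

theorem signedRep_apply (cs : CoxeterSystem M W) (w t : W) (ε : ZMod 2) :
    signedRep cs w (t, ε) = (w * t * w⁻¹, ε + invParity cs w t) := by
  obtain ⟨ω, rfl⟩ := cs.wordProd_surjective w
  simp [invParity, signedRep_wordProd]

theorem invParity_wordProd (cs : CoxeterSystem M W) (ω : List B) (t : W) :
    invParity cs (cs.wordProd ω) t = (cs.rightInvSeq ω).count t := by
  simp [invParity, signedRep_wordProd]

theorem invParity_mul (cs : CoxeterSystem M W) (u v t : W) :
    invParity cs (u * v) t = invParity cs v t + invParity cs u (v * t * v⁻¹) := by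
  have h : signedRep cs (u * v) (t, 0) = signedRep cs u (signedRep cs v (t, 0)) := by
    rw [map_mul]; rfl
  rw [signedRep_apply, signedRep_apply, signedRep_apply] at h
  simpa using congrArg Prod.snd h

theorem invParity_self (cs : CoxeterSystem M W) {t : W} (ht : cs.IsReflection t) :
    invParity cs t t = 1 := by
  obtain ⟨w, i, rfl⟩ := ht
  have h1 : invParity cs (w * w⁻¹) (w * cs.simple i * w⁻¹) = 0 := by
    have := invParity_wordProd cs [] (w * cs.simple i * w⁻¹)
    simpa using this
  have hs : invParity cs (cs.simple i) (cs.simple i) = 1 := by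
    have := invParity_wordProd cs [i] (cs.simple i)
    simpa using this
  have e : w⁻¹ * (w * cs.simple i * w⁻¹) * w⁻¹⁻¹ = cs.simple i := by group
  rw [invParity_mul, e] at h1
  rw [invParity_mul, invParity_mul, e, mul_inv_cancel_right, hs]
  linear_combination h1

theorem mem_rightInvSeq_of_invParity (cs : CoxeterSystem M W) {ω : List B} {t : W}
    (h : invParity cs (cs.wordProd ω) t ≠ 0) : t ∈ cs.rightInvSeq ω := by
  by_contra hn
  rw [invParity_wordProd, List.count_eq_zero_of_not_mem hn] at h
  simp at h

theorem isRightInversion_of_invParity (cs : CoxeterSystem M W) {w t : W}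
    (h : invParity cs w t ≠ 0) : cs.IsRightInversion w t := by
  obtain ⟨ω, hω, rfl⟩ := cs.exists_isReduced w
  exact cs.isRightInversion_of_mem_rightInvSeq hω (mem_rightInvSeq_of_invParity cs h)

/-- The strong exchange condition, for an arbitrary (not necessarily reduced) word. -/
theorem strong_exchange (cs : CoxeterSystem M W) {ω : List B} {t : W} (ht : cs.IsReflection t)
    (h : cs.length (cs.wordProd ω * t) < cs.length (cs.wordProd ω)) :
    ∃ j < ω.length, cs.wordProd ω * t = cs.wordProd (ω.eraseIdx j) := by
  have h1 : invParity cs (cs.wordProd ω) t ≠ 0 := by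
    intro h0
    have h2 : invParity cs (cs.wordProd ω * t) t ≠ 0 := by
      have e : t * t * t⁻¹ = t := by group
      rw [invParity_mul, invParity_self cs ht, e, h0]
      simp
    have h3 := (isRightInversion_of_invParity cs h2).2
    rw [mul_assoc, ht.mul_self, mul_one] at h3
    omega
  obtain ⟨j, hj, rfl⟩ := List.mem_iff_getElem.1 (mem_rightInvSeq_of_invParity cs h1)
  refine ⟨j, by simpa using hj, ?_⟩
  rw [← cs.wordProd_mul_getD_rightInvSeq, List.getD_eq_getElem _ _ hj]

end Exchange

/-! ### Bruhat order: chains, lifting and subwords -/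

section Bruhat

/-- A single ascending step of the Bruhat order. -/
def BruhatStep (cs : CoxeterSystem M W) (u v : W) : Prop :=
  ∃ t, cs.IsReflection t ∧ v = u * t ∧ cs.length u < cs.length v

theorem coxBruhatLE_iff (cs : CoxeterSystem M W) {u w : W} :
    CoxBruhatLE cs u w ↔ Relation.ReflTransGen (BruhatStep cs) u w := by
  constructor
  · rintro ⟨ts, hts, hw, hlen⟩
    induction ts generalizing u with
    | nil => simp only [List.foldl_nil] at hw; rw [hw]
    | cons t ts ih =>
      have h0 := hlen 0 (by simp)
      simp only [List.take_zero, List.foldl_nil, List.take_succ_cons, List.foldl_cons] at h0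
      refine Relation.ReflTransGen.head ⟨t, hts t (by simp), rfl, h0⟩
        (ih (fun t' h' => hts t' (by simp [h'])) hw ?_)
      intro k hk
      have := hlen (k + 1) (by simpa using hk)
      simpa only [List.take_succ_cons, List.foldl_cons] using this
  · intro h
    induction h using Relation.ReflTransGen.head_induction_on with
    | refl => exact ⟨[], by simp, rfl, by simp⟩
    | head hstep _ ih =>
      obtain ⟨t, ht, rfl, hl⟩ := hstep
      obtain ⟨ts, hts, hw, hlen⟩ := ih
      refine ⟨t :: ts, by simpa using ⟨ht, hts⟩, hw, ?_⟩
      rintro (_ | k) hk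
      · simpa using hl
      · simpa only [List.take_succ_cons, List.foldl_cons] using hlen k (by simpa using hk)

theorem CoxBruhatLE.refl (cs : CoxeterSystem M W) (w : W) : CoxBruhatLE cs w w :=
  (coxBruhatLE_iff cs).2 .refl

theorem CoxBruhatLE.trans {cs : CoxeterSystem M W} {u v w : W} (h1 : CoxBruhatLE cs u v)
    (h2 : CoxBruhatLE cs v w) : CoxBruhatLE cs u w :=
  (coxBruhatLE_iff cs).2 (((coxBruhatLE_iff cs).1 h1).trans ((coxBruhatLE_iff cs).1 h2))

theorem CoxBruhatLE.length_le {cs : CoxeterSystem M W} {u w : W} (h : CoxBruhatLE cs u w) :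
    cs.length u ≤ cs.length w := by
  induction (coxBruhatLE_iff cs).1 h with
  | refl => rfl
  | tail h1 h2 ih =>
    obtain ⟨t, -, -, hl⟩ := h2
    exact (ih ((coxBruhatLE_iff cs).2 h1)).trans hl.le

theorem coxBruhatLE_mul_reflection (cs : CoxeterSystem M W) {u t : W} (ht : cs.IsReflection t)
    (h : cs.length u < cs.length (u * t)) : CoxBruhatLE cs u (u * t) :=
  (coxBruhatLE_iff cs).2 (.single ⟨t, ht, rfl, h⟩)

theorem coxBruhatLE_mul_simple (cs : CoxeterSystem M W) {u : W} {i : B}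
    (h : cs.length u < cs.length (u * cs.simple i)) : CoxBruhatLE cs u (u * cs.simple i) :=
  coxBruhatLE_mul_reflection cs (cs.isReflection_simple i) h

theorem CoxBruhatLE.inv {cs : CoxeterSystem M W} {u w : W} (h : CoxBruhatLE cs u w) :
    CoxBruhatLE cs u⁻¹ w⁻¹ := by
  rw [coxBruhatLE_iff] at h ⊢
  induction h with
  | refl => exact .refl
  | @tail v x _ h2 ih =>
    obtain ⟨t, ht, rfl, hl⟩ := h2
    refine ih.tail ⟨v * t * v⁻¹, ht.conj v, ?_, by simpa only [cs.length_inv] using hl⟩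
    rw [mul_inv_rev, ht.inv]; group

theorem coxBruhatLE_simple_mul (cs : CoxeterSystem M W) {u : W} {i : B}
    (h : cs.length u < cs.length (cs.simple i * u)) : CoxBruhatLE cs u (cs.simple i * u) := by
  have := coxBruhatLE_mul_simple cs (u := u⁻¹) (i := i) (by
    rw [← cs.length_inv u, ← cs.length_inv (cs.simple i * u)] at h
    simpa using h)
  simpa using this.inv

/-- The lifting property for a single step: multiplying by `s_i` either stays below the upper
element or commutes with the step. -/
theorem BruhatStep.lift {cs : CoxeterSystem M W} {u w : W} (h : BruhatStep cs u w) (i : B) :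
    CoxBruhatLE cs (u * cs.simple i) w ∨
      CoxBruhatLE cs (u * cs.simple i) (w * cs.simple i) := by
  have h0 := h
  obtain ⟨t, ht, rfl, hl⟩ := h
  by_cases hts : t = cs.simple i
  · left; rw [hts]; exact CoxBruhatLE.refl _ _
  rcases cs.length_mul_simple u i with hi | hi
  · right
    set t' := cs.simple i * t * cs.simple i with ht'
    have hrefl : cs.IsReflection t' := by simpa using ht.conj (cs.simple i)
    have e : u * t * cs.simple i = u * cs.simple i * t' := by
      rw [ht']; simp only [mul_assoc, cs.simple_mul_simple_cancel_left]
    rw [e]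
    apply coxBruhatLE_mul_reflection cs hrefl
    by_contra hcon
    have hlt := lt_of_le_of_ne (not_lt.1 hcon) (hrefl.length_mul_left_ne _)
    obtain ⟨ω, hω, hu⟩ := cs.exists_isReduced u
    have hword : u * cs.simple i = cs.wordProd (ω ++ [i]) := by
      rw [cs.wordProd_append, cs.wordProd_singleton, hu]
    rw [hword] at hlt
    obtain ⟨j, hj, hj'⟩ := strong_exchange cs hrefl hlt
    rw [← hword, ← e] at hj'
    by_cases hjl : j < ω.length
    · rw [List.eraseIdx_append_of_lt_length hjl, cs.wordProd_append, cs.wordProd_singleton] at hj'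
      have h1 := mul_right_cancel hj'
      have h2 := cs.length_wordProd_le (ω.eraseIdx j)
      rw [← h1, List.length_eraseIdx_of_lt hjl] at h2
      have h3 : cs.length u = ω.length := by rw [hu]; exact hω
      omega
    · have hjeq : j = ω.length := by simp at hj; omega
      rw [hjeq, List.eraseIdx_append_of_length_le le_rfl] at hj'
      simp only [Nat.sub_self, List.eraseIdx_cons_zero, List.append_nil, ← hu] at hj'
      apply hts
      have h1 : t * cs.simple i = 1 := by
        have : u * (t * cs.simple i) = u * 1 := by rw [← mul_assoc, hj', mul_one]
        exact mul_left_cancel this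
      rw [← cs.inv_simple i]; exact eq_inv_of_mul_eq_one_left h1
  · left
    have h1 : CoxBruhatLE cs (u * cs.simple i) u := by
      have := coxBruhatLE_mul_simple cs (u := u * cs.simple i) (i := i) (by simp; omega)
      simpa using this
    exact h1.trans ((coxBruhatLE_iff cs).2 (.single h0))

theorem CoxBruhatLE.lift {cs : CoxeterSystem M W} {u w : W} (h : CoxBruhatLE cs u w) (i : B) :
    CoxBruhatLE cs (u * cs.simple i) w ∨
      CoxBruhatLE cs (u * cs.simple i) (w * cs.simple i) := by
  rw [coxBruhatLE_iff] at h
  induction h using Relation.ReflTransGen.head_induction_on with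
  | refl => exact .inr (CoxBruhatLE.refl _ _)
  | head h1 h2 ih =>
    rcases h1.lift i with h | h
    · exact .inl (h.trans ((coxBruhatLE_iff cs).2 h2))
    · exact ih.imp h.trans h.trans

theorem CoxBruhatLE.mul_simple {cs : CoxeterSystem M W} {u w : W} (h : CoxBruhatLE cs u w) {i : B}
    (hi : cs.length w < cs.length (w * cs.simple i)) :
    CoxBruhatLE cs (u * cs.simple i) (w * cs.simple i) :=
  (h.lift i).elim (fun h => h.trans (coxBruhatLE_mul_simple cs hi)) id

theorem CoxBruhatLE.simple_mul {cs : CoxeterSystem M W} {u w : W} (h : CoxBruhatLE cs u w) {i : B}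
    (hi : cs.length w < cs.length (cs.simple i * w)) :
    CoxBruhatLE cs (cs.simple i * u) (cs.simple i * w) := by
  have := (h.inv.mul_simple (i := i) (by
    rw [← cs.length_inv w, ← cs.length_inv (cs.simple i * w)] at hi
    simpa using hi)).inv
  simpa using this

/-- Everything below the product of a word, reduced or not, is the product of a subword. -/
theorem CoxBruhatLE.exists_sublist {cs : CoxeterSystem M W} {u : W} {ω : List B}
    (h : CoxBruhatLE cs u (cs.wordProd ω)) : ∃ ω', ω'.Sublist ω ∧ u = cs.wordProd ω' := by
  rw [coxBruhatLE_iff] at h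
  induction h using Relation.ReflTransGen.head_induction_on with
  | refl => exact ⟨ω, List.Sublist.refl _, rfl⟩
  | @head a c h1 _ ih =>
    obtain ⟨t, ht, rfl, hl⟩ := h1
    obtain ⟨ω', hsub, hω'⟩ := ih
    have ha : cs.wordProd ω' * t = a := by rw [← hω', mul_assoc, ht.mul_self, mul_one]
    obtain ⟨j, -, hj⟩ := strong_exchange cs (ω := ω') ht (by rw [ha, ← hω']; exact hl)
    exact ⟨_, (List.eraseIdx_sublist ω' j).trans hsub, by rw [← ha, hj]⟩

theorem coxBruhatLE_of_sublist (cs : CoxeterSystem M W) {ω ω' : List B} (hω : cs.IsReduced ω)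
    (h : ω'.Sublist ω) : CoxBruhatLE cs (cs.wordProd ω') (cs.wordProd ω) := by
  induction ω using List.reverseRecOn generalizing ω' with
  | nil => rw [List.sublist_nil.1 h]; exact CoxBruhatLE.refl _ _
  | append_singleton ω i ih =>
    have hred : cs.IsReduced ω := by
      have := hω.take ω.length
      simpa using this
    have hlt : cs.length (cs.wordProd ω) < cs.length (cs.wordProd ω * cs.simple i) := by
      have h1 : cs.length (cs.wordProd (ω ++ [i])) = (ω ++ [i]).length := hω
      have h2 : cs.length (cs.wordProd ω) = ω.length := hred
      rw [cs.wordProd_append, cs.wordProd_singleton, List.length_append] at h1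
      simp at h1; omega
    rw [cs.wordProd_append, cs.wordProd_singleton]
    obtain ⟨ω₁, ω₂, rfl, h1, h2⟩ := List.sublist_append_iff.1 h
    rcases List.sublist_singleton.1 h2 with rfl | rfl
    · rw [List.append_nil]
      exact (ih hred h1).trans (coxBruhatLE_mul_simple cs hlt)
    · rw [cs.wordProd_append, cs.wordProd_singleton]
      exact (ih hred h1).mul_simple hlt

theorem one_coxBruhatLE (cs : CoxeterSystem M W) (w : W) : CoxBruhatLE cs 1 w := by
  obtain ⟨ω, hω, rfl⟩ := cs.exists_isReduced w
  simpa using coxBruhatLE_of_sublist cs hω (List.nil_sublist ω)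

theorem exists_simple_coxBruhatLE (cs : CoxeterSystem M W) {w : W} (hw : w ≠ 1) :
    ∃ i, CoxBruhatLE cs (cs.simple i) w := by
  obtain ⟨ω, hω, rfl⟩ := cs.exists_isReduced w
  cases ω with
  | nil => simp at hw
  | cons i ω =>
    exact ⟨i, by simpa using coxBruhatLE_of_sublist cs hω (List.singleton_sublist.2
      (List.mem_cons_self (a := i) (l := ω)))⟩

theorem CoxBruhatLE.of_mul_simple {cs : CoxeterSystem M W} {u w : W} {i : B}
    (h : CoxBruhatLE cs u (w * cs.simple i)) :
    CoxBruhatLE cs u w ∨ ∃ v, CoxBruhatLE cs v w ∧ u = v * cs.simple i := by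
  obtain ⟨ω, hω, rfl⟩ := cs.exists_isReduced w
  rw [← cs.wordProd_singleton, ← cs.wordProd_append] at h
  obtain ⟨ω', hsub, rfl⟩ := h.exists_sublist
  obtain ⟨ω₁, ω₂, rfl, h1, h2⟩ := List.sublist_append_iff.1 hsub
  rcases List.sublist_singleton.1 h2 with rfl | rfl
  · left; rw [List.append_nil]; exact coxBruhatLE_of_sublist cs hω h1
  · right
    exact ⟨_, coxBruhatLE_of_sublist cs hω h1, by
      rw [cs.wordProd_append, cs.wordProd_singleton]⟩

theorem CoxBruhatLE.of_simple_mul {cs : CoxeterSystem M W} {u w : W} {i : B}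
    (h : CoxBruhatLE cs u (cs.simple i * w)) :
    CoxBruhatLE cs u w ∨ ∃ v, CoxBruhatLE cs v w ∧ u = cs.simple i * v := by
  have h1 := h.inv
  rw [mul_inv_rev, cs.inv_simple] at h1
  rcases h1.of_mul_simple with h2 | ⟨v, hv, he⟩
  · left; simpa using h2.inv
  · right
    refine ⟨v⁻¹, by simpa using hv.inv, ?_⟩
    rw [← inv_inv u, he]; simp

end Bruhat

/-! ### Parabolic subgroups -/

section Parabolic

variable {cs : CoxeterSystem M W} {J : Set B}

theorem InParabolic.mul {u v : W} (hu : InParabolic cs J u) (hv : InParabolic cs J v) :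
    InParabolic cs J (u * v) := by
  obtain ⟨ω, h, rfl⟩ := hu
  obtain ⟨ω', h', rfl⟩ := hv
  refine ⟨ω ++ ω', ?_, cs.wordProd_append ω ω'⟩
  intro i hi
  exact (List.mem_append.1 hi).elim (h i) (h' i)

theorem InParabolic.inv {u : W} (hu : InParabolic cs J u) : InParabolic cs J u⁻¹ := by
  obtain ⟨ω, h, rfl⟩ := hu
  exact ⟨ω.reverse, by simpa using h, cs.wordProd_reverse ω⟩

theorem InParabolic.simple {i : B} (hi : i ∈ J) : InParabolic cs J (cs.simple i) :=
  ⟨[i], by simpa using hi, cs.wordProd_singleton i⟩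

theorem InParabolic.mono {J' : Set B} (hJ : J ⊆ J') {u : W} (hu : InParabolic cs J u) :
    InParabolic cs J' u :=
  hu.imp fun _ h => ⟨fun i hi => hJ (h.1 i hi), h.2⟩

theorem InParabolic.of_le {u w : W} (hw : InParabolic cs J w) (h : CoxBruhatLE cs u w) :
    InParabolic cs J u := by
  obtain ⟨ω, hω, rfl⟩ := hw
  obtain ⟨ω', hsub, rfl⟩ := h.exists_sublist
  exact ⟨ω', fun i hi => hω i (hsub.subset hi), rfl⟩

theorem InParabolic.not_mul_simple {v : W} {i : B} (hv : InParabolic cs J v) (hi : i ∉ J) :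
    ¬ InParabolic cs J (v * cs.simple i) := fun h =>
  hi (mem_of_inParabolic_simple cs (by simpa using hv.inv.mul h))

theorem InParabolic.not_simple_mul {v : W} {i : B} (hv : InParabolic cs J v) (hi : i ∉ J) :
    ¬ InParabolic cs J (cs.simple i * v) := fun h =>
  hi (mem_of_inParabolic_simple cs (by simpa using h.mul hv.inv))

theorem InParabolic.length_mul_simple {v : W} {i : B} (hv : InParabolic cs J v) (hi : i ∉ J) :
    cs.length (v * cs.simple i) = cs.length v + 1 := by
  rcases cs.length_mul_simple v i with h | h
  · exact h
  · exfalso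
    have h1 := coxBruhatLE_mul_simple cs (u := v * cs.simple i) (i := i) (by simp; omega)
    rw [cs.simple_mul_simple_cancel_right] at h1
    exact hv.not_mul_simple hi (hv.of_le h1)

theorem InParabolic.length_simple_mul {v : W} {i : B} (hv : InParabolic cs J v) (hi : i ∉ J) :
    cs.length (cs.simple i * v) = cs.length v + 1 := by
  have := hv.inv.length_mul_simple hi
  rwa [← cs.length_inv, mul_inv_rev, cs.inv_simple, inv_inv, cs.length_inv] at this

/-- Conjugation by a simple reflection `s_i` outside `J` either lengthens `v ∈ W_J` by two or fixes
it: if the last multiplication shortens `s_i v`, exchange deletes a letter from a word `s_i ω` for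
`s_i v`, and deleting any letter of `ω` would put `s_i` into `W_J`. -/
theorem InParabolic.conj_eq_of_length_lt {v : W} {i : B} (hv : InParabolic cs J v) (hi : i ∉ J)
    (h : cs.length (cs.simple i * v * cs.simple i) < cs.length (cs.simple i * v)) :
    cs.simple i * v * cs.simple i = v := by
  obtain ⟨ω, hω, rfl⟩ := id hv
  rw [← cs.wordProd_cons] at h ⊢
  obtain ⟨j, -, hj⟩ := strong_exchange cs (cs.isReflection_simple i) h
  cases j with
  | zero => simpa using hj
  | succ j =>
    exfalso
    rw [List.eraseIdx_cons_succ, cs.wordProd_cons, cs.wordProd_cons, mul_assoc] at hj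
    apply hv.not_mul_simple hi
    exact ⟨ω.eraseIdx j, fun k hk => hω k ((List.eraseIdx_sublist ω j).subset hk),
      (mul_left_cancel hj).symm⟩

/-- An element of `W_J` whose conjugate by a simple reflection outside `J` is again in `W_J` commutes
with that reflection. -/
theorem InParabolic.conj_eq_of_conj_mem {v : W} {i : B} (hv : InParabolic cs J v) (hi : i ∉ J)
    (h : InParabolic cs J (cs.simple i * v * cs.simple i)) :
    cs.simple i * v * cs.simple i = v := by
  apply hv.conj_eq_of_length_lt hi
  have := h.length_mul_simple hi
  rw [cs.simple_mul_simple_cancel_right] at this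
  omega

end Parabolic

/-! ### Ideals generated by expressions without repeated letters -/

section Underline

variable {cs : CoxeterSystem M W}

theorem underlineProd_concat (l : List B) (i : B) :
    underlineProd cs (l ++ [i]) = underlineAct cs (underlineProd cs l) i := by
  simp [underlineProd]

theorem underlineProd_singleton (i : B) : underlineProd cs [i] = cs.simple i := by
  simp [underlineProd, underlineAct]

theorem simple_mul_eq_of_conj_eq {w : W} {i : B} (h : cs.simple i * w * cs.simple i = w) :
    cs.simple i * w = w * cs.simple i := by
  rw [← congrArg (· * cs.simple i) h]; simp

theorem underlineAct_of_eq {w : W} {i : B} (h : cs.simple i * w * cs.simple i = w) :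
    underlineAct cs w i = w * cs.simple i := if_pos h

theorem underlineAct_of_ne {w : W} {i : B} (h : cs.simple i * w * cs.simple i ≠ w) :
    underlineAct cs w i = cs.simple i * w * cs.simple i := if_neg h

theorem conj_mul_self {w : W} (hw : w * w = 1) (i : B) :
    cs.simple i * w * cs.simple i * (cs.simple i * w * cs.simple i) = 1 := by
  have : cs.simple i * w * cs.simple i * (cs.simple i * w * cs.simple i) =
      cs.simple i * (w * w) * cs.simple i := by
    simp only [mul_assoc, cs.simple_mul_simple_cancel_left]
  rw [this, hw, mul_one, cs.simple_mul_simple_self]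

theorem underlineAct_mul_self {w : W} (hw : w * w = 1) (i : B) :
    underlineAct cs w i * underlineAct cs w i = 1 := by
  by_cases h : cs.simple i * w * cs.simple i = w
  · rw [underlineAct_of_eq h, mul_assoc, ← mul_assoc (cs.simple i), h, hw]
  · rw [underlineAct_of_ne h, conj_mul_self hw]

theorem underlineProd_mul_self (l : List B) : underlineProd cs l * underlineProd cs l = 1 := by
  induction l using List.reverseRecOn with
  | nil => simp [underlineProd]
  | append_singleton l i ih => rw [underlineProd_concat]; exact underlineAct_mul_self ih i

theorem underlineProd_inParabolic (l : List B) :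
    InParabolic cs {i | i ∈ l} (underlineProd cs l) := by
  induction l using List.reverseRecOn with
  | nil => exact ⟨[], by simp, by simp [underlineProd]⟩
  | append_singleton l i ih =>
    have h1 : InParabolic cs {j | j ∈ l ++ [i]} (underlineProd cs l) :=
      ih.mono fun j (hj : j ∈ l) => List.mem_append_left _ hj
    have h2 : InParabolic cs {j | j ∈ l ++ [i]} (cs.simple i) :=
      InParabolic.simple (List.mem_append_right _ (List.mem_singleton_self i))
    rw [underlineProd_concat, underlineAct]
    split_ifs
    · exact h1.mul h2
    · exact (h2.mul h1).mul h2

/-- For `i ∉ J`, if conjugation by `s_i` moves `w ∈ W_J` then it lengthens `w` by two; this is the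
second of the two steps, the first being `InParabolic.length_mul_simple`. -/
theorem InParabolic.length_lt_conj {J : Set B} {w : W} {i : B} (hw : InParabolic cs J w)
    (hi : i ∉ J) (h : cs.simple i * w * cs.simple i ≠ w) :
    cs.length (w * cs.simple i) < cs.length (cs.simple i * (w * cs.simple i)) := by
  by_contra hcon
  have h1 := hw.length_mul_simple hi
  have h2 := hw.length_simple_mul hi
  have h3 := cs.length_mul_simple_ne (cs.simple i * w) i
  rw [← mul_assoc] at hcon
  exact h (hw.conj_eq_of_length_lt hi (by omega))

theorem coxBruhatLE_underlineAct {J : Set B} {w : W} {i : B} (hw : InParabolic cs J w)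
    (hi : i ∉ J) : CoxBruhatLE cs w (underlineAct cs w i) := by
  have h1 : CoxBruhatLE cs w (w * cs.simple i) :=
    coxBruhatLE_mul_simple cs (by rw [hw.length_mul_simple hi]; omega)
  by_cases h : cs.simple i * w * cs.simple i = w
  · rwa [underlineAct_of_eq h]
  · rw [underlineAct_of_ne h, mul_assoc]
    exact h1.trans (coxBruhatLE_simple_mul cs (hw.length_lt_conj hi h))

/-- The action of a letter outside the support is monotone for the Bruhat order. -/
theorem CoxBruhatLE.underlineAct {J : Set B} {v w : W} {i : B} (h : CoxBruhatLE cs v w)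
    (hw : InParabolic cs J w) (hi : i ∉ J) :
    CoxBruhatLE cs (underlineAct cs v i) (underlineAct cs w i) := by
  have hv : InParabolic cs J v := hw.of_le h
  have hlt : cs.length w < cs.length (w * cs.simple i) := by
    rw [hw.length_mul_simple hi]; omega
  have hvs : CoxBruhatLE cs (v * cs.simple i) (w * cs.simple i) := h.mul_simple hlt
  by_cases hc : cs.simple i * w * cs.simple i = w
  · -- If `s_i` commutes with `w` it commutes with every `v ≤ w`: as `s_i v ≤ s_i w = w s_i`, and
    -- `s_i v` is not in `W_J`, a subword argument gives `s_i v s_i ∈ W_J`.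
    have hsv : CoxBruhatLE cs (cs.simple i * v) (w * cs.simple i) := by
      rw [← simple_mul_eq_of_conj_eq hc]
      exact h.simple_mul (by rw [hw.length_simple_mul hi]; omega)
    have hcv : cs.simple i * v * cs.simple i = v := by
      rcases hsv.of_mul_simple with h1 | ⟨x, hx, he⟩
      · exact absurd (hw.of_le h1) (hv.not_simple_mul hi)
      · apply hv.conj_eq_of_conj_mem hi
        rw [he, cs.simple_mul_simple_cancel_right]
        exact hw.of_le hx
    rwa [underlineAct_of_eq hc, underlineAct_of_eq hcv]
  · have hlt2 := hw.length_lt_conj hi hc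
    rw [underlineAct_of_ne hc, mul_assoc]
    by_cases hcv : cs.simple i * v * cs.simple i = v
    · rw [underlineAct_of_eq hcv]
      exact hvs.trans (coxBruhatLE_simple_mul cs hlt2)
    · rw [underlineAct_of_ne hcv, mul_assoc]
      exact hvs.simple_mul hlt2

theorem underlineProd_le_of_sublist {l l' : List B} (hl : l.Nodup) (h : l'.Sublist l) :
    CoxBruhatLE cs (underlineProd cs l') (underlineProd cs l) := by
  induction l using List.reverseRecOn generalizing l' with
  | nil => rw [List.sublist_nil.1 h]; exact CoxBruhatLE.refl _ _
  | append_singleton l i ih =>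
    have hi : i ∉ {j | j ∈ l} := fun hi =>
      (List.disjoint_of_nodup_append hl) hi (List.mem_singleton_self i)
    have hw := underlineProd_inParabolic (cs := cs) l
    obtain ⟨l₁, l₂, rfl, h1, h2⟩ := List.sublist_append_iff.1 h
    have hle := ih hl.of_append_left h1
    rw [underlineProd_concat]
    rcases List.sublist_singleton.1 h2 with rfl | rfl
    · rw [List.append_nil]
      exact hle.trans (coxBruhatLE_underlineAct hw hi)
    · rw [underlineProd_concat]
      exact hle.underlineAct hw hi

/-- An involution of the form `v s_i` with `v ∈ W_J` and `i ∉ J` arises from an involution `v`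
commuting with `s_i`. -/
theorem InParabolic.commute_of_involution {J : Set B} {v : W} {i : B} (hv : InParabolic cs J v)
    (hi : i ∉ J) (h : v * cs.simple i * (v * cs.simple i) = 1) :
    v * v = 1 ∧ cs.simple i * v * cs.simple i = v := by
  have h1 : cs.simple i * v * cs.simple i = v⁻¹ := by
    apply eq_inv_of_mul_eq_one_right
    rw [← h]; simp only [mul_assoc]
  have h2 := hv.conj_eq_of_conj_mem hi (h1 ▸ hv.inv)
  refine ⟨?_, h2⟩
  rw [h2] at h1
  exact mul_eq_one_iff_eq_inv.2 h1

/-- The involutions below the value of an expression without repeated letters are values of its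
subwords. By induction on the last letter `i`, with `w` the value of the preceding letters: an
involution below `w s_i` or `s_i w s_i` is `v`, `v s_i`, `s_i v` or `s_i v s_i` with `v ≤ w`, and in
the middle two cases `InParabolic.commute_of_involution` shows that `s_i` commutes with `v`. -/
theorem exists_sublist_of_le_underlineProd {l : List B} (hl : l.Nodup) {u : W} (hu : u * u = 1)
    (h : CoxBruhatLE cs u (underlineProd cs l)) : ∃ l', l'.Sublist l ∧ u = underlineProd cs l' := by
  induction l using List.reverseRecOn generalizing u with
  | nil =>
    have h1 := h.length_le
    simp only [underlineProd, List.foldl_nil, cs.length_one, Nat.le_zero,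
      cs.length_eq_zero_iff] at h1
    exact ⟨[], List.Sublist.refl _, by simp [underlineProd, h1]⟩
  | append_singleton l i ih =>
    have hi : i ∉ {j | j ∈ l} := fun hi =>
      (List.disjoint_of_nodup_append hl) hi (List.mem_singleton_self i)
    have hw := underlineProd_inParabolic (cs := cs) l
    rw [underlineProd_concat] at h
    set w := underlineProd cs l with hwdef
    have hdown : ∀ u, u * u = 1 → CoxBruhatLE cs u w →
        ∃ l', l'.Sublist (l ++ [i]) ∧ u = underlineProd cs l' := fun u hu h => by
      obtain ⟨l', h1, h2⟩ := ih hl.of_append_left hu h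
      exact ⟨l', h1.trans (List.sublist_append_left _ _), h2⟩
    have hact : ∀ v, v * v = 1 → CoxBruhatLE cs v w →
        ∃ l', l'.Sublist (l ++ [i]) ∧ underlineAct cs v i = underlineProd cs l' := fun v hv h => by
      obtain ⟨l', h1, h2⟩ := ih hl.of_append_left hv h
      exact ⟨l' ++ [i], h1.append (List.Sublist.refl _), by rw [underlineProd_concat, h2]⟩
    have hmul : ∀ v, u = v * cs.simple i → CoxBruhatLE cs v w →
        ∃ l', l'.Sublist (l ++ [i]) ∧ u = underlineProd cs l' := fun v he hv => by
      obtain ⟨h1, h2⟩ := (hw.of_le hv).commute_of_involution hi (he ▸ hu)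
      obtain ⟨l', h3, h4⟩ := hact v h1 hv
      exact ⟨l', h3, by rw [← h4, underlineAct_of_eq h2, he]⟩
    by_cases hc : cs.simple i * w * cs.simple i = w
    · rw [underlineAct_of_eq hc] at h
      rcases h.of_mul_simple with h1 | ⟨v, hv, he⟩
      · exact hdown u hu h1
      · exact hmul v he hv
    · rw [underlineAct_of_ne hc, mul_assoc] at h
      rcases h.of_simple_mul with h | ⟨x, hx, hex⟩
      · rcases h.of_mul_simple with h1 | ⟨v, hv, he⟩
        · exact hdown u hu h1
        · exact hmul v he hv
      rcases hx.of_mul_simple with hv | ⟨v, hv, rfl⟩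
      · -- `u = s_i x` is an involution, so `u = x⁻¹ s_i`, and `x` is itself an involution.
        have hinv : u = x⁻¹ * cs.simple i := by
          have : u = u⁻¹ := mul_eq_one_iff_eq_inv.1 hu
          rw [this, hex, mul_inv_rev, cs.inv_simple]
        have h1 := (hw.of_le hv).inv.commute_of_involution hi (hinv ▸ hu)
        have h2 : x⁻¹ = x := (mul_eq_one_iff_eq_inv.1 h1.1).trans (inv_inv x)
        exact hmul x (h2 ▸ hinv) hv
      · have hvv : v * v = 1 := by
          have := conj_mul_self (cs := cs) hu i
          rw [hex] at this
          simpa [mul_assoc] using this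
        by_cases hcv : cs.simple i * v * cs.simple i = v
        · rw [← mul_assoc, hcv] at hex
          exact hdown u hu (hex ▸ hv)
        · obtain ⟨l', h3, h4⟩ := hact v hvv hv
          exact ⟨l', h3, by rw [← h4, underlineAct_of_ne hcv, hex, mul_assoc]⟩

/-- A letter of `l'` gives a simple reflection below the value of `l'`, hence one in the parabolic
subgroup generated by the letters of `l`. -/
theorem mem_of_underlineProd_le {l l' : List B} (hl' : l'.Nodup)
    (h : CoxBruhatLE cs (underlineProd cs l') (underlineProd cs l)) : l' ⊆ l := by
  intro i hi
  have h1 : CoxBruhatLE cs (cs.simple i) (underlineProd cs l') := by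
    rw [← underlineProd_singleton]
    exact underlineProd_le_of_sublist hl' (List.singleton_sublist.2 hi)
  exact mem_of_inParabolic_simple cs ((underlineProd_inParabolic l).of_le (h1.trans h))

theorem filter_mem_eq_of_sublist {l l' : List B} (hl : l.Nodup) (h : l'.Sublist l) :
    l.filter (· ∈ l') = l' := by
  induction h with
  | slnil => rfl
  | @cons l' l a h ih =>
    rw [List.nodup_cons] at hl
    have : a ∉ l' := fun ha => hl.1 (h.subset ha)
    simpa [this] using ih hl.2
  | @cons_cons l' l a h ih =>
    rw [List.nodup_cons] at hl
    rw [List.filter_cons_of_pos (by simp)]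
    congr 1
    refine Eq.trans (List.filter_congr fun x hx => ?_) (ih hl.2)
    have : x ≠ a := by rintro rfl; exact hl.1 hx
    simp [this]

/-- The ideal of an involution with an expression without repeated letters consists of the values
of the subwords of that expression, ordered by inclusion of the sets of letters. -/
theorem coxBoolean_of_nodup {l : List B} (hl : l.Nodup) : CoxBoolean cs (underlineProd cs l) := by
  let sub : Finset (Fin l.length) → List B := fun A => l.filter fun b => ∃ a ∈ A, l.get a = b
  have hsub : ∀ A, (sub A).Sublist l := fun A => List.filter_sublist
  have hmem : ∀ A a, l.get a ∈ sub A ↔ a ∈ A := by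
    intro A a
    have hinj : Function.Injective l.get := List.nodup_iff_injective_get.1 hl
    simp only [sub, List.mem_filter, decide_eq_true_eq]
    constructor
    · rintro ⟨-, b, hb, he⟩
      exact hinj he ▸ hb
    · exact fun ha => ⟨List.get_mem _ _, a, ha, rfl⟩
  let g : Finset (Fin l.length) →
      {u : W // u * u = 1 ∧ CoxBruhatLE cs u (underlineProd cs l)} := fun A =>
    ⟨underlineProd cs (sub A), underlineProd_mul_self _, underlineProd_le_of_sublist hl (hsub A)⟩
  have hg : ∀ A A', CoxBruhatLE cs (g A).1 (g A').1 ↔ A ⊆ A' := by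
    intro A A'
    constructor
    · intro h a ha
      exact (hmem A' a).1 (mem_of_underlineProd_le (hl.sublist (hsub A)) h ((hmem A a).2 ha))
    · intro h
      refine underlineProd_le_of_sublist (hl.sublist (hsub A')) ?_
      refine List.monotone_filter_right l fun b hb => ?_
      simp only [decide_eq_true_eq] at hb ⊢
      exact hb.imp fun a ha => ⟨h ha.1, ha.2⟩
  have hbij : Function.Bijective g := by
    constructor
    · intro A A' h
      exact Finset.Subset.antisymm ((hg A A').1 (h ▸ CoxBruhatLE.refl _ _))
        ((hg A' A).1 (h ▸ CoxBruhatLE.refl _ _))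
    · rintro ⟨u, hu, hle⟩
      obtain ⟨l', h1, h2⟩ := exists_sublist_of_le_underlineProd hl hu hle
      refine ⟨Finset.univ.filter fun a => l.get a ∈ l', Subtype.ext ?_⟩
      change underlineProd cs (sub _) = u
      rw [h2, ← filter_mem_eq_of_sublist hl h1]
      congr 1
      refine List.filter_congr fun x hx => ?_
      obtain ⟨a, rfl⟩ := List.get_of_mem hx
      rw [filter_mem_eq_of_sublist hl h1]
      have hinj : Function.Injective l.get := List.nodup_iff_injective_get.1 hl
      simp only [Finset.mem_filter, Finset.mem_univ, true_and, decide_eq_decide]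
      exact ⟨fun ⟨b, hb, he⟩ => he ▸ hb, fun h => ⟨a, h, rfl⟩⟩
  refine ⟨l.length, (Equiv.ofBijective g hbij).symm, fun a b => ?_⟩
  rw [← hg, ← Equiv.ofBijective_apply g hbij, ← Equiv.ofBijective_apply g hbij,
    Equiv.apply_symm_apply, Equiv.apply_symm_apply]

end Underline

/-! ### Counting atoms -/

section Atoms

variable {cs : CoxeterSystem M W}

/-- Every nontrivial involution arises from a strictly smaller one by the action of a letter. -/
theorem exists_underlineAct_eq {w : W} (hw : w * w = 1) (h1 : w ≠ 1) :
    ∃ p i, p * p = 1 ∧ underlineAct cs p i = w ∧ CoxBruhatLE cs p w ∧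
      cs.length p < cs.length w := by
  obtain ⟨i, hi⟩ := cs.exists_rightDescent_of_ne_one h1
  have hi' : cs.length (w * cs.simple i) < cs.length w := hi
  have hws : CoxBruhatLE cs (w * cs.simple i) w := by
    have := coxBruhatLE_mul_simple cs (u := w * cs.simple i) (i := i) (by simpa using hi')
    simpa using this
  by_cases hc : cs.simple i * w * cs.simple i = w
  · have hp : w * cs.simple i * (w * cs.simple i) = 1 := by
      rw [mul_assoc, ← mul_assoc (cs.simple i), hc, hw]
    refine ⟨w * cs.simple i, i, hp, ?_, hws, hi'⟩
    rw [underlineAct_of_eq, cs.simple_mul_simple_cancel_right]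
    rw [← mul_assoc, hc]
  · -- Exchange forces `ℓ(s w s) < ℓ(w s)`, as `s w s ≠ w`.
    have hlt : cs.length (cs.simple i * (w * cs.simple i)) < cs.length (w * cs.simple i) := by
      obtain ⟨ω, hω, he⟩ := cs.exists_isReduced (w * cs.simple i)
      have hwω : cs.wordProd (ω ++ [i]) = w := by
        rw [cs.wordProd_append, ← he, cs.wordProd_singleton, cs.simple_mul_simple_cancel_right]
      have hlen : cs.length (w * cs.simple i) = ω.length := by rw [he]; exact hω
      have hinv : w⁻¹ = w := (mul_eq_one_iff_eq_inv.1 hw).symm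
      have hwt : w * (w⁻¹ * cs.simple i * w) = cs.simple i * w := by group
      have hsw : cs.length (cs.simple i * w) < cs.length w := by
        rw [← cs.length_inv (cs.simple i * w), mul_inv_rev, cs.inv_simple, hinv]
        exact hi'
      have ht : cs.IsReflection (w⁻¹ * cs.simple i * w) := by
        simpa using (cs.isReflection_simple i).conj w⁻¹
      obtain ⟨j, hj, hj'⟩ := strong_exchange cs (ω := ω ++ [i]) ht (by rwa [hwω, hwt])
      rw [hwω, hwt] at hj'
      by_cases hjl : j < ω.length
      · rw [List.eraseIdx_append_of_lt_length hjl, cs.wordProd_append,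
          cs.wordProd_singleton] at hj'
        rw [← mul_assoc, hj', cs.simple_mul_simple_cancel_right]
        have h2 := cs.length_wordProd_le (ω.eraseIdx j)
        rw [List.length_eraseIdx_of_lt hjl] at h2
        omega
      · exfalso
        have hjeq : j = ω.length := by simp at hj; omega
        rw [hjeq, List.eraseIdx_append_of_length_le le_rfl] at hj'
        simp only [Nat.sub_self, List.eraseIdx_cons_zero, List.append_nil, ← he] at hj'
        apply hc
        rw [hj', cs.simple_mul_simple_cancel_right]
    refine ⟨cs.simple i * w * cs.simple i, i, conj_mul_self hw i, ?_, ?_, ?_⟩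
    · have e : cs.simple i * (cs.simple i * w * cs.simple i) * cs.simple i = w := by
        simp [mul_assoc]
      rw [underlineAct_of_ne, e]
      rw [e]; exact Ne.symm hc
    · have := coxBruhatLE_simple_mul cs (u := cs.simple i * (w * cs.simple i)) (i := i)
        (by simpa using hlt)
      rw [cs.simple_mul_simple_cancel_left, ← mul_assoc] at this
      exact this.trans hws
    · rw [mul_assoc]; omega

/-- Descending greedily from `w` gives an expression whose length is the length of a chain in the
ideal of `w`, and hence bounds from below the rank of `w` under an order embedding. -/
theorem exists_underlineProd_length_le {m : ℕ} (F : W → Finset (Fin m)) (w : W) (hw : w * w = 1)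
    (hF : ∀ a b, a * a = 1 → b * b = 1 → CoxBruhatLE cs a w → CoxBruhatLE cs b w →
      (CoxBruhatLE cs a b ↔ F a ⊆ F b)) :
    ∃ l, underlineProd cs l = w ∧ l.length ≤ (F w).card := by
  induction hn : cs.length w using Nat.strong_induction_on generalizing w with
  | _ n ih =>
    by_cases h1 : w = 1
    · exact ⟨[], by simp [underlineProd, h1], by simp⟩
    obtain ⟨p, i, hp, hpi, hle, hlt⟩ := exists_underlineAct_eq (cs := cs) hw h1
    obtain ⟨l, hl, hlen⟩ := ih _ (hn ▸ hlt) p hp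
      (fun a b ha hb hap hbp => hF a b ha hb (hap.trans hle) (hbp.trans hle)) rfl
    refine ⟨l ++ [i], by rw [underlineProd_concat, hl, hpi], ?_⟩
    have hss : F p ⊂ F w := by
      refine ⟨(hF p w hp hw hle (CoxBruhatLE.refl _ _)).1 hle, fun h => ?_⟩
      have := ((hF w p hw hp (CoxBruhatLE.refl _ _) hle).2 h).length_le
      omega
    have := Finset.card_lt_card hss
    simp only [List.length_append, List.length_singleton]
    omega

/-- The atoms of a Boolean ideal are simple reflections, all of which occur in every expression. -/
theorem le_card_toFinset_of_coxBoolean {w : W} {m : ℕ}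
    (f : {u : W // u * u = 1 ∧ CoxBruhatLE cs u w} ≃ Finset (Fin m))
    (hf : ∀ a b, CoxBruhatLE cs a.1 b.1 ↔ f a ⊆ f b) {l : List B}
    (hl : underlineProd cs l = w) : m ≤ l.toFinset.card := by
  have hbot : f ⟨1, by simp, one_coxBruhatLE cs w⟩ = ∅ := by
    have := (hf ⟨1, by simp, one_coxBruhatLE cs w⟩ (f.symm ∅)).1 (one_coxBruhatLE cs _)
    rw [Equiv.apply_symm_apply] at this
    exact Finset.subset_empty.1 this
  have key : ∀ a : Fin m, ∃ i ∈ l, (f.symm {a}).1 = cs.simple i := by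
    intro a
    have hne : (f.symm {a}).1 ≠ 1 := by
      intro h
      have h2 : f.symm {a} = ⟨1, by simp, one_coxBruhatLE cs w⟩ := Subtype.ext h
      rw [← h2, Equiv.apply_symm_apply] at hbot
      exact Finset.singleton_ne_empty a hbot
    obtain ⟨i, hi⟩ := exists_simple_coxBruhatLE cs hne
    have hiw : CoxBruhatLE cs (cs.simple i) w := hi.trans (f.symm {a}).2.2
    have hsub := (hf ⟨cs.simple i, cs.simple_mul_simple_self i, hiw⟩ (f.symm {a})).1 hi
    rw [Equiv.apply_symm_apply, Finset.subset_singleton_iff] at hsub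
    refine ⟨i, ?_, ?_⟩
    · have h3 := underlineProd_inParabolic (cs := cs) l
      rw [hl] at h3
      exact mem_of_inParabolic_simple cs (h3.of_le hiw)
    · rcases hsub with h | h
      · exfalso
        rw [← hbot] at h
        have h1 := congrArg Subtype.val (f.injective h)
        have h2 := cs.length_simple i
        simp only at h1
        rw [h1, cs.length_one] at h2
        omega
      · rw [← h, Equiv.symm_apply_apply]
  choose φ hφ hφ' using key
  have hinj : Function.Injective φ := by
    intro a b hab
    have : f.symm {a} = f.symm {b} := Subtype.ext (by rw [hφ', hφ', hab])
    exact Finset.singleton_injective (f.symm.injective this)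
  calc m = (Finset.univ.image φ).card := by
        rw [Finset.card_image_of_injective _ hinj, Finset.card_univ, Fintype.card_fin]
    _ ≤ l.toFinset.card := by
        apply Finset.card_le_card
        intro i hi
        obtain ⟨a, -, rfl⟩ := Finset.mem_image.1 hi
        exact List.mem_toFinset.2 (hφ a)

/-- A reduced expression has at most `m` letters, `m` the rank of the Boolean ideal, and at least `m`
distinct ones. -/
theorem CoxBoolean.nodup_of_isReduced {w : W} (hw : w * w = 1) (h : CoxBoolean cs w) {l : List B}
    (hl : IsReducedSExpr cs l w) : l.Nodup := by
  obtain ⟨m, f, hf⟩ := h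
  let F : W → Finset (Fin m) := fun u =>
    if h : u * u = 1 ∧ CoxBruhatLE cs u w then f ⟨u, h⟩ else ∅
  obtain ⟨l', hl', hlen⟩ := exists_underlineProd_length_le (cs := cs) F w hw (by
    intro a b ha hb haw hbw
    simp only [F, dif_pos (And.intro ha haw), dif_pos (And.intro hb hbw)]
    exact hf ⟨a, ha, haw⟩ ⟨b, hb, hbw⟩)
  have h1 : m ≤ l.toFinset.card := le_card_toFinset_of_coxBoolean f hf hl.1
  have h2 : l.length ≤ l'.length := hl.2 l' hl'
  have h3 : (F w).card ≤ m := by simpa using Finset.card_le_univ (F w)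
  have h4 : l.toFinset.card = l.length := le_antisymm (List.toFinset_card_le l) (by omega)
  rw [List.card_toFinset] at h4
  exact List.dedup_eq_self.1 ((List.dedup_sublist l).eq_of_length h4)

theorem exists_isReducedSExpr {w : W} (hw : w * w = 1) : ∃ l, IsReducedSExpr cs l w := by
  have hex : ∃ n, ∃ l : List B, IsSExpr cs l w ∧ l.length = n := by
    suffices ∃ l : List B, IsSExpr cs l w from this.elim fun l hl => ⟨_, l, hl, rfl⟩
    induction hn : cs.length w using Nat.strong_induction_on generalizing w with
    | _ n ih =>
      by_cases h1 : w = 1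
      · exact ⟨[], by simp [IsSExpr, underlineProd, h1]⟩
      obtain ⟨p, i, hp, hpi, -, hlt⟩ := exists_underlineAct_eq (cs := cs) hw h1
      obtain ⟨l, hl⟩ := ih _ (hn ▸ hlt) hp rfl
      exact ⟨l ++ [i], by rw [IsSExpr, underlineProd_concat, hl, hpi]⟩
  obtain ⟨l, hl, hlen⟩ := Nat.find_spec hex
  exact ⟨l, hl, fun l' hl' => hlen ▸ Nat.find_min' hex ⟨l', hl', rfl⟩⟩

end Atoms

/-- Let `(W, S)` be a Coxeter system and let `w` be an involution in `W`.  The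
following are equivalent: (i) `w` is Boolean; (ii) no reduced `S̲`-expression for
`w` has a repeated letter; (iii) there exists an `S̲`-expression for `w` without
repeated letters. -/
theorem coxBoolean_iff_nodup (cs : CoxeterSystem M W) (w : W) (hw : w * w = 1) :
    (CoxBoolean cs w ↔ ∀ l : List B, IsReducedSExpr cs l w → l.Nodup) ∧
    (CoxBoolean cs w ↔ ∃ l : List B, IsSExpr cs l w ∧ l.Nodup) := by
  have h12 : CoxBoolean cs w → ∀ l : List B, IsReducedSExpr cs l w → l.Nodup :=
    fun h _ hl => h.nodup_of_isReduced hw hl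
  have h23 : (∀ l : List B, IsReducedSExpr cs l w → l.Nodup) →
      ∃ l : List B, IsSExpr cs l w ∧ l.Nodup := fun h =>
    (exists_isReducedSExpr hw).elim fun l hl => ⟨l, hl.1, h l hl⟩
  have h31 : (∃ l : List B, IsSExpr cs l w ∧ l.Nodup) → CoxBoolean cs w := by
    rintro ⟨l, rfl, hl⟩
    exact coxBoolean_of_nodup hl
  exact ⟨⟨h12, h31 ∘ h23⟩, ⟨h23 ∘ h12, h31⟩⟩
end

section
/- Let P be a poset isomorphic to the Boolean lattice of all subsets of a finite set, and let f be an order automorphism of P. Then the subposet of P induced on the set of fixed points of f is itself isomorphic to the Boolean lattice of all subsets of some finite set. -/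
/-! Transporting `f` along `e` gives an order automorphism `g` of the Boolean algebra
`Finset (Fin m)`. An order automorphism of a Boolean algebra preserves `⊔`, `⊓`, `⊥` and
complements, so the fixed points of `g` form a Boolean subalgebra. A finite Boolean algebra is
complete and atomic, hence isomorphic to the power set of its finite set of atoms. -/

/-- The Boolean subalgebra of fixed points of an order automorphism of a Boolean algebra. -/
def fixedSubalgebra {α : Type*} [BooleanAlgebra α] (g : α ≃o α) : BooleanSubalgebra α where
  carrier := {x | g x = x}
  supClosed' := fun a (ha : g a = a) b (hb : g b = b) =>
    show g (a ⊔ b) = a ⊔ b by rw [map_sup, ha, hb]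
  infClosed' := fun a (ha : g a = a) b (hb : g b = b) =>
    show g (a ⊓ b) = a ⊓ b by rw [map_inf, ha, hb]
  compl_mem' := fun {a} (ha : g a = a) => show g aᶜ = aᶜ by rw [map_compl', ha]
  bot_mem' := map_bot g

theorem exists_orderIso_finset_of_finite (α : Type*) [BooleanAlgebra α] [Finite α] :
    ∃ k : ℕ, Nonempty (α ≃o Finset (Fin k)) := by
  classical
  have := Fintype.ofFinite α
  -- The order of this instance is definitionally the given one.
  letI := Fintype.toCompleteAtomicBooleanAlgebra α
  exact ⟨_, ⟨(CompleteAtomicBooleanAlgebra.toSetOfIsAtom (α := α)).trans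
    ((Finite.equivFin {a : α // IsAtom a}).toOrderIsoSet.trans
      Fintype.finsetOrderIsoSet.symm)⟩⟩

/-- Let `P` be a poset isomorphic to the Boolean lattice of all subsets of a finite
set (modelled as `Finset (Fin m)` ordered by inclusion), and let `f` be an order
automorphism of `P`.  Then the subposet of `P` induced on the set of fixed points
of `f` is itself isomorphic to the Boolean lattice of all subsets of some finite set. -/
theorem fixedPoints_of_boolean_automorphism_boolean
    {P : Type*} [PartialOrder P] {m : ℕ} (e : P ≃o Finset (Fin m)) (f : P ≃o P) :
    ∃ k : ℕ, Nonempty ({x : P // f x = x} ≃o Finset (Fin k)) := by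
  let g : Finset (Fin m) ≃o Finset (Fin m) := (e.symm.trans f).trans e
  have h_mem : ∀ x : P, f x = x ↔ e x ∈ fixedSubalgebra g := fun x => by
    change _ ↔ e (f (e.symm (e x))) = e x
    simp
  let i : {x : P // f x = x} ≃o fixedSubalgebra g :=
    { toEquiv := e.toEquiv.subtypeEquiv h_mem
      map_rel_iff' := e.le_iff_le }
  obtain ⟨k, ⟨j⟩⟩ := exists_orderIso_finset_of_finite (fixedSubalgebra g)
  exact ⟨k, ⟨i.trans j⟩⟩
end

section
/- Every connected component of an involution w ∈ S_n is an interval of consecutive integers {a, a+1, …, b} ⊆ [n]. Equivalently, if i < j < k and the positions i and k are connected in w, then j lies in the same connected component as i and k. -/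
/-- One step of the connectedness relation: positions `a` and `b` satisfy
`sgn(a - b) = -sgn(w a - w b)`. -/
def CrossStep {n : ℕ} (w : Equiv.Perm (Fin n)) (a b : Fin n) : Prop :=
  Int.sign ((a : ℕ) - (b : ℕ) : ℤ) = - Int.sign ((w a : ℕ) - (w b : ℕ) : ℤ)

/-- Positions `i` and `j` are connected in `w` if there is a sequence
`i = i₀, i₁, …, i_k = j` with `sgn(i_{l-1} - i_l) = -sgn(w i_{l-1} - w i_l)`
for all `l ∈ [k]`. -/
def Connected {n : ℕ} (w : Equiv.Perm (Fin n)) : Fin n → Fin n → Prop :=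
  Relation.ReflTransGen (CrossStep w)

theorem crossStep_symm {n : ℕ} {w : Equiv.Perm (Fin n)} {a b : Fin n}
    (h : CrossStep w a b) : CrossStep w b a := by
  unfold CrossStep at *
  rw [← neg_sub ((a : ℕ) : ℤ), ← neg_sub ((w a : ℕ) : ℤ), Int.sign_neg, Int.sign_neg, h]

theorem connected_symm {n : ℕ} {w : Equiv.Perm (Fin n)} {a b : Fin n}
    (h : Connected w a b) : Connected w b a := by
  induction h with
  | refl => exact .refl
  | tail _ hbc ih => exact Relation.ReflTransGen.head (crossStep_symm hbc) ih

theorem crossStep_iff_of_lt {n : ℕ} {w : Equiv.Perm (Fin n)} {a b : Fin n} (hab : a < b) :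
    CrossStep w a b ↔ w b < w a := by
  have h : ((a : ℕ) - (b : ℕ) : ℤ) < 0 := by
    have : (a : ℕ) < b := hab
    omega
  unfold CrossStep
  rw [Int.sign_eq_neg_one_of_neg h, neg_inj, eq_comm, Int.sign_eq_one_iff_pos, Fin.lt_def]
  omega

/-- A position jumped over by a step is connected to the step's left endpoint, directly or
through its right endpoint. -/
theorem connected_of_crossStep_of_between {n : ℕ} {w : Equiv.Perm (Fin n)} {a j b : Fin n}
    (haj : a < j) (hjb : j < b) (h : CrossStep w a b) : Connected w a j := by
  have hinv := (crossStep_iff_of_lt (haj.trans hjb)).1 h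
  rcases lt_or_ge (w j) (w a) with hj | hj
  · exact .single ((crossStep_iff_of_lt haj).2 hj)
  · exact (Relation.ReflTransGen.single h).tail
      (crossStep_symm ((crossStep_iff_of_lt hjb).2 (hinv.trans_le hj)))

theorem connected_of_between {n : ℕ} {w : Equiv.Perm (Fin n)} {i j k : Fin n}
    (hij : i < j) (hjk : j < k) (h : Connected w i k) : Connected w i j := by
  induction h with
  | refl => exact absurd hjk hij.asymm
  | @tail b c hib hbc ih =>
    rcases lt_trichotomy j b with hj | rfl | hj
    · exact ih hj
    · exact hib
    · exact Relation.ReflTransGen.trans hib (connected_of_crossStep_of_between hj hjk hbc)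

/-- Every connected component of an involution `w ∈ Sₙ` is an interval of consecutive
integers: if `i < j < k` and the positions `i` and `k` are connected in `w`, then `j`
lies in the same connected component as `i` and `k`. -/
theorem connected_component_is_interval {n : ℕ} (w : Equiv.Perm (Fin n))
    (hw : IsInvolution w) (i j k : Fin n) (hij : i < j) (hjk : j < k)
    (h : Connected w i k) :
    Connected w i j ∧ Connected w j k := by
  have hconn := connected_of_between hij hjk h
  exact ⟨hconn, Relation.ReflTransGen.trans (connected_symm hconn) h⟩
end
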